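/- arXiv:1910.13492 — 12 statements merged into one kernel-verified Lean document; each statement's English description precedes it below -/
import Mathlib

section
/- Proposition (rank of the twist group, Prop. 5.1). Let (V, E, s, t, ℓ, κ) be a connected enhanced level graph of depth N and let φ be the associated level rotation homomorphism. Then: (i) the set of tuples n ∈ ℤ^{{0,−1,…,−N}} satisfying n_{ℓ(s(e))} = n_{ℓ(t(e))} for every edge e ∈ E is exactly the subgroup ℤ·(1,1,…,1) of constant tuples; (ii) ker φ is a subgroup of finite index in ℤ^{{0,−1,…,−N}} ≅ ℤ^{N+1}; (iii) there exists a subgroup W of ker φ which is free abelian of rank N such that ker φ is the internal direct sum of ℤ·(1,…,1) and W. (In the paper's notation: ker(τ_Λ^•) ≅ ℤ is generated by (1,…,1), the vertical twist group is free abelian of rank N, and ker(φ_Λ^•) = vTw_Λ ⊕ ℤ.) -/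
/-- **Proposition 5.1** (rank of the twist group).  Let `(V, E, s, t, ℓ, κ)` be a
connected enhanced level graph of depth `N` (levels `{0, −1, …, −N}` encoded by
`Fin (N+1)`, index `i` standing for level `−i`, so that `min` of indices is the
*higher* level `ℓ(e⁺)` and `max` is the *lower* level `ℓ(e⁻)`), and let
`φ : ℤ^{levels} → ∏_{e vertical} ℤ/κ_eℤ`, `φ(n)_e = n_{ℓ(e⁺)} − n_{ℓ(e⁻)} mod κ_e`,
be the level rotation homomorphism.  Then:
(i) the tuples `n` with `n_{ℓ(s e)} = n_{ℓ(t e)}` for every edge `e` are exactly the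
constant tuples, i.e. the subgroup `ℤ·(1,…,1)`;
(ii) `ker φ` has finite index in `ℤ^{N+1}`;
(iii) there is a subgroup `W ≤ ker φ`, free abelian of rank `N`, with `ker φ` the
internal direct sum of `ℤ·(1,…,1)` and `W`. -/
theorem rank_of_twist_group
    (N : ℕ) (V E : Type) [Fintype V] [Fintype E]
    (s t : E → V) (ℓ : V → Fin (N + 1)) (κ : E → ℕ)
    (hconn : ∀ v w : V, Relation.ReflTransGen
      (fun a b => ∃ e : E, s e = a ∧ t e = b ∨ s e = b ∧ t e = a) v w)
    (hsurj : Function.Surjective ℓ)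
    (hκ : ∀ e : E, ℓ (s e) ≠ ℓ (t e) → 0 < κ e)
    (φ : (Fin (N + 1) → ℤ) →+ ∀ e : {e : E // ℓ (s e) ≠ ℓ (t e)}, ZMod (κ e.1))
    (hφ : ∀ (n : Fin (N + 1) → ℤ) (e : {e : E // ℓ (s e) ≠ ℓ (t e)}),
      φ n e = ((n (min (ℓ (s e.1)) (ℓ (t e.1))) - n (max (ℓ (s e.1)) (ℓ (t e.1))) : ℤ) :
        ZMod (κ e.1))) :
    (∀ n : Fin (N + 1) → ℤ,
        (∀ e : E, n (ℓ (s e)) = n (ℓ (t e))) ↔ ∃ m : ℤ, n = fun _ => m) ∧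
    φ.ker.FiniteIndex ∧
    (∃ W : AddSubgroup (Fin (N + 1) → ℤ),
      W ≤ φ.ker ∧ Nonempty (W ≃+ (Fin N → ℤ)) ∧
      AddSubgroup.zmultiples ((fun _ => (1 : ℤ)) : Fin (N + 1) → ℤ) ⊔ W = φ.ker ∧
      AddSubgroup.zmultiples ((fun _ => (1 : ℤ)) : Fin (N + 1) → ℤ) ⊓ W = ⊥) := by
  classical
  have hfin : Finite (∀ e : {e : E // ℓ (s e) ≠ ℓ (t e)}, ZMod (κ e.1)) := by
    have : ∀ e : {e : E // ℓ (s e) ≠ ℓ (t e)}, Finite (ZMod (κ e.1)) := fun e => by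
      have : NeZero (κ e.1) := ⟨(hκ e.1 e.2).ne'⟩
      infer_instance
    infer_instance
  refine ⟨?_, ?_, ?_⟩
  · intro n
    constructor
    · intro h
      have key : ∀ v w : V, n (ℓ v) = n (ℓ w) := by
        intro v w
        induction hconn v w with
        | refl => rfl
        | tail _ hbc ih =>
          obtain ⟨e, ⟨rfl, rfl⟩ | ⟨rfl, rfl⟩⟩ := hbc
          · exact ih.trans (h e)
          · exact ih.trans (h e).symm
      refine ⟨n 0, funext fun i => ?_⟩
      obtain ⟨v, rfl⟩ := hsurj i
      obtain ⟨w, hw⟩ := hsurj 0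
      rw [← hw]
      exact key v w
    · rintro ⟨m, rfl⟩ e
      rfl
  · exact AddSubgroup.finiteIndex_ker φ
  · let c : (Fin N → ℤ) →+ (Fin (N + 1) → ℤ) :=
      { toFun := fun x => Fin.cons 0 x
        map_zero' := by
          funext i
          refine Fin.cases ?_ (fun j => ?_) i <;> simp
        map_add' := fun x y => by
          funext i
          refine Fin.cases ?_ (fun j => ?_) i <;> simp }
    have hc0 : ∀ x, c x 0 = 0 := fun x => rfl
    have hcs : ∀ x j, c x (Fin.succ j) = x j := fun x j => rfl
    have hcinj : Function.Injective c := fun x y h => by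
      funext j
      rw [← hcs x, ← hcs y, h]
    have hone : ((fun _ => (1 : ℤ)) : Fin (N + 1) → ℤ) ∈ φ.ker := by
      rw [AddMonoidHom.mem_ker]
      funext e
      rw [hφ]
      simp
    have hle : (φ.comp c).ker.map c ≤ φ.ker := by
      rintro _ ⟨x, hx, rfl⟩
      exact hx
    refine ⟨(φ.comp c).ker.map c, hle, ?_, ?_, ?_⟩
    · have hfi : (φ.comp c).ker.FiniteIndex := AddSubgroup.finiteIndex_ker _
      obtain ⟨f⟩ := Int.addSubgroup_index_ne_zero_iff.1 hfi.index_ne_zero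
      exact ⟨((φ.comp c).ker.equivMapOfInjective c hcinj).symm.trans f⟩
    · apply le_antisymm
      · exact sup_le ((AddSubgroup.zmultiples_le_of_mem hone)) hle
      · intro n hn
        have hm : n 0 • ((fun _ => (1 : ℤ)) : Fin (N + 1) → ℤ) ∈ φ.ker :=
          AddSubgroup.zsmul_mem _ hone _
        have hcn : c (fun j => n j.succ - n 0) =
            n - n 0 • ((fun _ => (1 : ℤ)) : Fin (N + 1) → ℤ) := by
          funext i
          refine Fin.cases ?_ (fun j => ?_) i
          · simp [hc0]
          · simp [hcs]
        refine AddSubgroup.mem_sup.2 ⟨_, AddSubgroup.zsmul_mem_zmultiples _ (n 0), _,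
          ⟨fun j => n j.succ - n 0, ?_, rfl⟩, ?_⟩
        · change φ (c _) = 0
          rw [hcn]
          exact AddSubgroup.sub_mem _ hn hm
        · rw [hcn]
          abel
    · rw [eq_bot_iff]
      rintro n ⟨hn, x, -, rfl⟩
      obtain ⟨m, hm⟩ := AddSubgroup.mem_zmultiples_iff.1 hn
      have h0 : m = 0 := by
        have := congrFun hm 0
        rw [hc0] at this
        simpa using this
      rw [AddSubgroup.mem_bot, ← hm, h0, zero_smul]
end

section
/- Lemma (simple vertical twist group, Lemma 5.2). Let (V, E, s, t, ℓ, κ) be a connected enhanced level graph of depth N and φ the associated level rotation homomorphism. For −N ≤ i ≤ −1 let b_i ∈ ℤ^{{0,−1,…,−N}} be the vector with entry 1 at each level j ≤ i and entry 0 at each level j > i, and let b_0 = (1,1,…,1). Say a vertical edge e crosses level i if ℓ(e⁻) ≤ i < ℓ(e⁺), and set a_i := lcm{κ_e : e crosses level i}. Then b_0 ∈ ker φ, each vector a_i·b_i for −N ≤ i ≤ −1 lies in ker φ, and the subgroup of ℤ^{{0,−1,…,−N}} generated by b_0, a_{−1}b_{−1}, …, a_{−N}b_{−N} has finite index; in particular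 these N+1 vectors are ℤ-linearly independent. (This shows the simple vertical twist group is a finite-index subgroup of the vertical twist group.) -/
/-- **Lemma 5.2** (simple vertical twist group).  Let `(V, E, s, t, ℓ, κ)` be a
connected enhanced level graph of depth `N` (levels `{0, −1, …, −N}` encoded by
`Fin (N+1)`, index `i` standing for level `−i`), with level rotation homomorphism `φ`.
For each `i` let `b_i` be the vector with entry `1` at each level `j ≤ i` (i.e. at each
index `q ≥ i`) and `0` elsewhere, so `b_0 = (1,…,1)`.  A vertical edge `e` crosses
level `i` if `ℓ(e⁻) ≤ i < ℓ(e⁺)` (in indices: `min < i ≤ max`), and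
`a_i = lcm {κ_e : e crosses level i}`.  Then `b_0 ∈ ker φ`, each `a_i • b_i ∈ ker φ`
for `i ≤ −1`, and the subgroup generated by `b_0, a_{−1}b_{−1}, …, a_{−N}b_{−N}` has
finite index; in particular these `N+1` vectors are `ℤ`-linearly independent. -/
theorem simple_vertical_twist_group_finite_index
    (N : ℕ) (V E : Type) [Fintype V] [Fintype E]
    (s t : E → V) (ℓ : V → Fin (N + 1)) (κ : E → ℕ)
    (hconn : ∀ v w : V, Relation.ReflTransGen
      (fun a b => ∃ e : E, s e = a ∧ t e = b ∨ s e = b ∧ t e = a) v w)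
    (hsurj : Function.Surjective ℓ)
    (hκ : ∀ e : E, ℓ (s e) ≠ ℓ (t e) → 0 < κ e)
    (φ : (Fin (N + 1) → ℤ) →+ ∀ e : {e : E // ℓ (s e) ≠ ℓ (t e)}, ZMod (κ e.1))
    (hφ : ∀ (n : Fin (N + 1) → ℤ) (e : {e : E // ℓ (s e) ≠ ℓ (t e)}),
      φ n e = ((n (min (ℓ (s e.1)) (ℓ (t e.1))) - n (max (ℓ (s e.1)) (ℓ (t e.1))) : ℤ) :
        ZMod (κ e.1)))
    (b : Fin (N + 1) → Fin (N + 1) → ℤ)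
    (hb : ∀ i q : Fin (N + 1), b i q = if i ≤ q then 1 else 0)
    (a : Fin (N + 1) → ℕ)
    (ha : ∀ i : Fin (N + 1), a i = Finset.lcm
      (Finset.univ.filter (fun e : E =>
        min (ℓ (s e)) (ℓ (t e)) < i ∧ i ≤ max (ℓ (s e)) (ℓ (t e)))) κ)
    (c : Fin (N + 1) → Fin (N + 1) → ℤ)
    (hc0 : c 0 = b 0)
    (hc : ∀ i : Fin (N + 1), i ≠ 0 → c i = (a i : ℤ) • b i) :
    b 0 ∈ φ.ker ∧
    (∀ i : Fin (N + 1), i ≠ 0 → (a i : ℤ) • b i ∈ φ.ker) ∧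
    (AddSubgroup.closure (Set.range c)).FiniteIndex ∧
    LinearIndependent ℤ c := by
  have key : ∀ i : Fin (N + 1), (a i : ℤ) • b i ∈ φ.ker := by
    intro i
    rw [AddMonoidHom.mem_ker]
    funext e
    rw [hφ]
    simp only [Pi.smul_apply, hb, smul_eq_mul, Pi.zero_apply]
    rw [← mul_sub, CharP.intCast_eq_zero_iff (ZMod (κ e.1)) (κ e.1)]
    by_cases h : min (ℓ (s e.1)) (ℓ (t e.1)) < i ∧ i ≤ max (ℓ (s e.1)) (ℓ (t e.1))
    · apply Dvd.dvd.mul_right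
      rw [Int.natCast_dvd_natCast, ha i]
      exact Finset.dvd_lcm (by simpa using h)
    · have hmm : min (ℓ (s e.1)) (ℓ (t e.1)) ≤ max (ℓ (s e.1)) (ℓ (t e.1)) := min_le_max
      have : (i ≤ min (ℓ (s e.1)) (ℓ (t e.1))) ↔ (i ≤ max (ℓ (s e.1)) (ℓ (t e.1))) :=
        ⟨fun h1 => h1.trans hmm, fun h1 => by
          by_contra h2
          exact h ⟨not_le.mp h2, h1⟩⟩
      simp only [this, sub_self, mul_zero, dvd_zero]
  have hapos : ∀ i, a i ≠ 0 := by
    intro i h0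
    rw [ha, Finset.lcm_eq_zero_iff] at h0
    obtain ⟨e, he, h0⟩ := h0
    have he' : min (ℓ (s e)) (ℓ (t e)) < i ∧ i ≤ max (ℓ (s e)) (ℓ (t e)) := by simpa using he
    refine (hκ e fun h => ?_).ne' h0
    rw [h, min_self, max_self] at he'
    exact absurd he'.1 (not_lt.mpr he'.2)
  have hli : LinearIndependent ℤ c := by
    have hdet : (Matrix.of c).det ≠ 0 := by
      rw [Matrix.det_of_upperTriangular]
      · refine Finset.prod_ne_zero_iff.mpr fun i _ => ?_
        by_cases hi : i = 0
        · subst hi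
          simp [hc0, hb]
        · simp [hc i hi, hb, hapos i]
      · intro i j hij
        have hij' : j < i := hij
        have hi : i ≠ 0 := (lt_of_le_of_lt (Fin.zero_le j) hij').ne'
        simp [hc i hi, hb, not_le.mpr hij']
    exact Matrix.linearIndependent_rows_of_det_ne_zero hdet
  refine ⟨?_, fun i _ => key i, ?_, hli⟩
  · rw [AddMonoidHom.mem_ker]
    funext e
    rw [hφ]
    simp [hb]
  · have hfin : Finite ((Fin (N + 1) → ℤ) ⧸ Submodule.span ℤ (Set.range c)) :=
      Submodule.finiteQuotientOfFreeOfRankEq _ (by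
        rw [finrank_span_eq_card hli]; simp)
    have h2 : (Submodule.span ℤ (Set.range c)).toAddSubgroup =
        AddSubgroup.closure (Set.range c) := Submodule.span_int_eq_addSubgroupClosure _
    rw [← h2]
    exact @AddSubgroup.finiteIndex_of_finite_quotient _ _ _ hfin
end

section
/- Proposition (characterization of the level rotation torus, Prop. 5.3). Let (V, E, s, t, ℓ, κ) be a connected enhanced level graph of depth N, and let L, I(e), S and Ψ be as defined in the context. Then: (i) Ψ is a group homomorphism taking values in S, i.e. ∏_{k∈I(e)}exp(2πi d_k) = (exp(2πi(∑_{k∈I(e)} d_k)/κ_e))^{κ_e} for every vertical edge e and every d ∈ ℂ^L; (ii) Ψ(d) is the identity of S if and only if every coordinate d_k is an integer and κ_e divides ∑_{k∈I(e)} d_k for every vertical edge e; (iii) the range of Ψ is exactly the connected component of the identity element in S (with the subspace topology induced from (ℂ*)^L × (ℂ*)^{E_v}). -/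
/-- **Proposition 5.3** (characterization of the level rotation torus).  Let
`(V, E, s, t, ℓ, κ)` be a connected enhanced level graph of depth `N` (levels
`{0, −1, …, −N}` encoded by `Fin (N+1)`, index `i` standing for level `−i`).  The set
of levels below `0`, `L = {−1, …, −N}`, is encoded by `Fin N` with index `m` standing
for level `−(m+1)`; for a vertical edge `e` the interval
`I(e) = {k ∈ L : ℓ(e⁻) ≤ k ≤ ℓ(e⁺) − 1}` then corresponds to the indices `m` with
`min (ℓ(s e)) (ℓ(t e)) ≤ m` and `m + 1 ≤ max (ℓ(s e)) (ℓ(t e))`.  Let `S` be the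
subgroup of `(ℂ*)^L × (ℂ*)^{E_v}` of pairs `(r, ρ)` with `∏_{k∈I(e)} r_k = ρ_e^{κ_e}`
for every vertical edge `e`, and let `Ψ(d) = ((exp(2πi d_k))_k,
(exp(2πi (∑_{k∈I(e)} d_k)/κ_e))_e)`.  Then: (i) `Ψ` is a group homomorphism taking
values in `S`; (ii) `Ψ d = 1` iff every `d_k` is an integer and `κ_e` divides
`∑_{k∈I(e)} d_k` for every vertical edge `e`; (iii) the range of `Ψ` is exactly the
connected component of the identity in `S` (with the subspace topology). -/
theorem level_rotation_torus_characterization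
    (N : ℕ) (V E : Type) [Fintype V] [Fintype E]
    (s t : E → V) (ℓ : V → Fin (N + 1)) (κ : E → ℕ)
    (hconn : ∀ v w : V, Relation.ReflTransGen
      (fun a b => ∃ e : E, s e = a ∧ t e = b ∨ s e = b ∧ t e = a) v w)
    (hsurj : Function.Surjective ℓ)
    (hκ : ∀ e : E, ℓ (s e) ≠ ℓ (t e) → 0 < κ e)
    (I : {e : E // ℓ (s e) ≠ ℓ (t e)} → Finset (Fin N))
    (hI : ∀ (e : {e : E // ℓ (s e) ≠ ℓ (t e)}) (m : Fin N),
      m ∈ I e ↔ ((min (ℓ (s e.1)) (ℓ (t e.1))) : ℕ) ≤ (m : ℕ) ∧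
        (m : ℕ) + 1 ≤ ((max (ℓ (s e.1)) (ℓ (t e.1))) : ℕ))
    (S : Subgroup ((Fin N → ℂˣ) × ({e : E // ℓ (s e) ≠ ℓ (t e)} → ℂˣ)))
    (hS : ∀ p : (Fin N → ℂˣ) × ({e : E // ℓ (s e) ≠ ℓ (t e)} → ℂˣ),
      p ∈ S ↔ ∀ e : {e : E // ℓ (s e) ≠ ℓ (t e)},
        (∏ k ∈ I e, p.1 k) = p.2 e ^ κ e.1)
    (Ψ : (Fin N → ℂ) → (Fin N → ℂˣ) × ({e : E // ℓ (s e) ≠ ℓ (t e)} → ℂˣ))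
    (hΨ : ∀ d : Fin N → ℂ, Ψ d =
      (fun k => Units.mk0 (Complex.exp (((2 * Real.pi : ℝ) : ℂ) * Complex.I * d k))
        (Complex.exp_ne_zero _),
       fun e => Units.mk0 (Complex.exp (((2 * Real.pi : ℝ) : ℂ) * Complex.I *
          (∑ k ∈ I e, d k) / (κ e.1 : ℂ))) (Complex.exp_ne_zero _))) :
    (∀ d : Fin N → ℂ, Ψ d ∈ S) ∧
    (∀ d d' : Fin N → ℂ, Ψ (d + d') = Ψ d * Ψ d') ∧
    (∀ d : Fin N → ℂ, Ψ d = 1 ↔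
      ((∀ k : Fin N, ∃ m : ℤ, d k = (m : ℂ)) ∧
       (∀ e : {e : E // ℓ (s e) ≠ ℓ (t e)}, ∃ m : ℤ,
          (∑ k ∈ I e, d k) = (κ e.1 : ℂ) * (m : ℂ)))) ∧
    Set.range Ψ = Subtype.val '' connectedComponent (1 : S) := by
  have h2 : (((2 * Real.pi : ℝ) : ℂ) * Complex.I) ≠ 0 := by
    simpa using Complex.two_pi_I_ne_zero
  have h2' : (((2 * Real.pi : ℝ) : ℂ) * Complex.I) = 2 * Real.pi * Complex.I := by
    push_cast; rfl
  have hκ' : ∀ e : {e : E // ℓ (s e) ≠ ℓ (t e)}, (κ e.1 : ℂ) ≠ 0 := fun e => by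
    exact_mod_cast (hκ e.1 e.2).ne'
  have key1 : ∀ (d : Fin N → ℂ) k, (((Ψ d).1 k : ℂˣ) : ℂ) =
      Complex.exp (((2 * Real.pi : ℝ) : ℂ) * Complex.I * d k) := by
    intro d k; rw [hΨ]; rfl
  have key2 : ∀ (d : Fin N → ℂ) e, (((Ψ d).2 e : ℂˣ) : ℂ) =
      Complex.exp (((2 * Real.pi : ℝ) : ℂ) * Complex.I * (∑ k ∈ I e, d k) / (κ e.1 : ℂ)) := by
    intro d k; rw [hΨ]; rfl
  have hmem : ∀ d : Fin N → ℂ, Ψ d ∈ S := by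
    intro d
    rw [hS]
    intro e
    apply Units.ext
    rw [Units.coe_prod, Units.val_pow_eq_pow_val, key2, ← Complex.exp_nat_mul]
    simp only [key1]
    rw [← Complex.exp_sum, ← Finset.mul_sum]
    congr 1
    field_simp [hκ' e]
  have hadd : ∀ d d' : Fin N → ℂ, Ψ (d + d') = Ψ d * Ψ d' := by
    intro d d'
    refine Prod.ext (funext fun k => Units.ext ?_) (funext fun e => Units.ext ?_)
    · rw [Prod.fst_mul, Pi.mul_apply, Units.val_mul, key1, key1, key1, ← Complex.exp_add]
      congr 1
      simp only [Pi.add_apply]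
      ring
    · rw [Prod.snd_mul, Pi.mul_apply, Units.val_mul, key2, key2, key2, ← Complex.exp_add]
      congr 1
      simp only [Pi.add_apply, Finset.sum_add_distrib]
      ring
  have hone : ∀ d : Fin N → ℂ, Ψ d = 1 ↔
      ((∀ k : Fin N, ∃ m : ℤ, d k = (m : ℂ)) ∧
       (∀ e : {e : E // ℓ (s e) ≠ ℓ (t e)}, ∃ m : ℤ,
          (∑ k ∈ I e, d k) = (κ e.1 : ℂ) * (m : ℂ))) := by
    intro d
    rw [Prod.ext_iff, funext_iff, funext_iff]
    refine and_congr (forall_congr' fun k => ?_) (forall_congr' fun e => ?_)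
    · rw [← Units.val_inj, key1]
      simp only [Prod.fst_one, Pi.one_apply, Units.val_one]
      rw [Complex.exp_eq_one_iff]
      refine exists_congr fun m => ?_
      rw [← h2', mul_comm (m : ℂ)]
      exact mul_right_inj' h2
    · rw [← Units.val_inj, key2]
      simp only [Prod.snd_one, Pi.one_apply, Units.val_one]
      rw [Complex.exp_eq_one_iff]
      refine exists_congr fun m => ?_
      rw [← h2', mul_comm (m : ℂ), mul_div_assoc, mul_right_inj' h2, div_eq_iff (hκ' e),
        mul_comm (m : ℂ)]
  refine ⟨hmem, hadd, hone, ?_⟩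
  have hzero : Ψ 0 = 1 := by
    rw [hone]
    exact ⟨fun k => ⟨0, by simp⟩, fun e => ⟨0, by simp⟩⟩
  have hcont : Continuous Ψ := by
    refine Continuous.prodMk ?_ ?_ (f := fun d => (Ψ d).1) (g := fun d => (Ψ d).2)
    · refine continuous_pi fun k => Units.isEmbedding_val₀.continuous_iff.2 ?_
      simp only [Function.comp_def, key1]
      fun_prop
    · refine continuous_pi fun k => Units.isEmbedding_val₀.continuous_iff.2 ?_
      simp only [Function.comp_def, key2]
      fun_prop
  -- the range of `Ψ` as a subgroup of `S`
  let F : Multiplicative (Fin N → ℂ) →* S :=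
    { toFun := fun d => ⟨Ψ d.toAdd, hmem _⟩
      map_one' := Subtype.ext hzero
      map_mul' := fun a b => Subtype.ext (hadd _ _) }
  have hFopen : IsOpen (F.range : Set S) := by
    apply Subgroup.isOpen_of_mem_nhds (g := 1)
    let D : S → Fin N → ℂ := fun x k =>
      Complex.log ((x.1.1 k : ℂˣ) : ℂ) / (((2 * Real.pi : ℝ) : ℂ) * Complex.I)
    have hD1 : D 1 = 0 := by
      funext k
      simp [D]
    have hD : ContinuousAt D 1 := by
      refine continuousAt_pi.2 fun k => ?_
      refine ContinuousAt.div_const ?_ _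
      refine ContinuousAt.clog ?_ ?_
      · have : Continuous fun x : S => ((x.1.1 k : ℂˣ) : ℂ) :=
          Units.continuous_val.comp ((continuous_apply k).comp
            (continuous_fst.comp continuous_subtype_val))
        exact this.continuousAt
      · simp
    have hΨD : ContinuousAt (fun x => Ψ (D x)) 1 := hcont.continuousAt.comp hD
    have hev : ∀ᶠ x : S in nhds 1, ∀ e : {e : E // ℓ (s e) ≠ ℓ (t e)},
        (Ψ (D x)).2 e * (x.1.2 e)⁻¹ ∉ {z : ℂˣ | z ^ κ e.1 = 1 ∧ z ≠ 1} := by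
      haveI : Finite {e : E // ℓ (s e) ≠ ℓ (t e)} := inferInstance
      refine Filter.eventually_all.2 fun e => ?_
      have hc : ContinuousAt (fun x : S => (Ψ (D x)).2 e * (x.1.2 e)⁻¹) 1 := by
        refine ContinuousAt.mul ?_ ?_
        · exact ((continuous_apply e).comp continuous_snd).continuousAt.comp hΨD
        · exact (((continuous_apply e).comp
            (continuous_snd.comp continuous_subtype_val)).inv).continuousAt
      have hfin : Set.Finite {z : ℂˣ | z ^ κ e.1 = 1 ∧ z ≠ 1} := by
        haveI : NeZero (κ e.1) := ⟨(hκ e.1 e.2).ne'⟩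
        have : Set.Finite ((rootsOfUnity (κ e.1) ℂ : Subgroup ℂˣ) : Set ℂˣ) :=
          @Set.toFinite _ _ (inferInstanceAs (Finite (rootsOfUnity (κ e.1) ℂ)))
        exact this.subset fun z hz => (mem_rootsOfUnity _ _).2 hz.1
      refine hc.eventually (hfin.isClosed.isOpen_compl.mem_nhds ?_)
      simp [hD1, hzero]
    filter_upwards [hev] with x hx
    refine ⟨Multiplicative.ofAdd (D x), Subtype.ext ?_⟩
    change Ψ (D x) = x.1
    have hfst : (Ψ (D x)).1 = x.1.1 := by
      refine funext fun k => Units.ext ?_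
      rw [key1]
      simp only [D]
      rw [mul_div_cancel₀ _ h2, Complex.exp_log (Units.ne_zero _)]
    refine Prod.ext hfst (funext fun e => ?_)
    have h := hx e
    have hp : ((Ψ (D x)).2 e * (x.1.2 e)⁻¹) ^ κ e.1 = 1 := by
      rw [mul_pow, inv_pow, ← (hS _).1 (hmem (D x)) e, ← (hS _).1 x.2 e, hfst, mul_inv_cancel]
    by_contra hne
    exact h ⟨hp, fun h1 => hne (mul_inv_eq_one.1 h1)⟩
  have hclopen : IsClopen (F.range : Set S) := ⟨F.range.isClosed_of_isOpen hFopen, hFopen⟩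
  have hFc : Continuous fun d : Fin N → ℂ => (⟨Ψ d, hmem d⟩ : S) := hcont.subtype_mk _
  apply Set.Subset.antisymm
  · rintro _ ⟨d, rfl⟩
    refine ⟨⟨Ψ d, hmem d⟩, ?_, rfl⟩
    have hpre := isPreconnected_range hFc
    exact hpre.subset_connectedComponent ⟨0, Subtype.ext hzero⟩ ⟨d, rfl⟩
  · rintro _ ⟨x, hx, rfl⟩
    obtain ⟨d, hd⟩ := hclopen.connectedComponent_subset F.range.one_mem hx
    exact ⟨d.toAdd, congrArg Subtype.val hd⟩
end

section
/- Lemma (holomorphy of partial application into the Banach space of bounded functions, Lemma 4.6). Let E and F be complex Banach spaces, U ⊆ E and V ⊆ F open sets, M ≥ 0, and let f : U × V → ℂ be holomorphic with |f(z,w)| ≤ M for all (z,w) ∈ U × V. Then for each z ∈ U the function w ↦ f(z,w) is a bounded continuous function on V, the induced map G : U → (V →ᵇ ℂ) defined by G(z)(w) = f(z,w) is holomorphic on U, and its Fréchet derivative satisfies (DG_z(h))(w) = D₁f_{(z,w)}(h) for every z ∈ U, h ∈ E and w ∈ V, where D₁f_{(z,w)} denotes the partial Fréchet derivative of f in the first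 variable at (z,w). -/
open Set Metric Filter Topology Asymptotics in
/-- Quadratic Taylor estimate for a bounded holomorphic function on a ball. -/
theorem taylor_estimate_aux {E : Type*} [NormedAddCommGroup E] [NormedSpace ℂ E]
    {g : E → ℂ} {c : E} {R M : ℝ} (hR : 0 < R)
    (hd : DifferentiableOn ℂ g (ball c R)) (hb : ∀ x ∈ ball c R, ‖g x‖ ≤ M) :
    ‖fderiv ℂ g c‖ ≤ 2 * M / R ∧
    ∀ x ∈ ball c R, ‖g x - g c - fderiv ℂ g c (x - c)‖ ≤ 4 * M * (‖x - c‖ / R) ^ 2 := by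
  have hc : c ∈ ball c R := mem_ball_self hR
  have h1 : MapsTo g (ball c R) (closedBall (g c) (2 * M)) := by
    intro x hx
    rw [mem_closedBall, dist_eq_norm]
    linarith [norm_sub_le (g x) (g c), hb x hx, hb c hc]
  have hL : ‖fderiv ℂ g c‖ ≤ 2 * M / R :=
    Complex.norm_fderiv_le_div_of_mapsTo_ball hd h1 hR
  refine ⟨hL, fun x hx => ?_⟩
  have hda : DifferentiableAt ℂ g c := hd.differentiableAt (ball_mem_nhds c hR)
  set L := fderiv ℂ g c with hLdef
  set k : E → ℂ := fun x => g x - g c - L (x - c) with hk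
  have hkc : k c = 0 := by simp [hk]
  have hkd : DifferentiableOn ℂ k (ball c R) := by
    have : Differentiable ℂ (fun x => L (x - c)) := by fun_prop
    exact (hd.sub_const _).sub this.differentiableOn
  have hkm : MapsTo k (ball c R) (closedBall (k c) (4 * M)) := by
    intro y hy
    have h2 := h1 hy
    rw [mem_closedBall, dist_eq_norm] at h2
    rw [hkc, mem_closedBall, dist_zero_right]
    have hy' : ‖y - c‖ ≤ R := by
      rw [mem_ball, dist_eq_norm] at hy
      exact hy.le
    have h3 : ‖L (y - c)‖ ≤ 2 * M / R * R := L.le_of_opNorm_le_of_le hL hy'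
    rw [div_mul_cancel₀ _ hR.ne'] at h3
    have := norm_sub_le (g y - g c) (L (y - c))
    simp only [hk]
    linarith
  have hko : (k · - k c) =o[𝓝 c] (fun w => ‖w - c‖ ^ 1) := by
    simp only [hkc, sub_zero, pow_one]
    exact (hda.hasFDerivAt.isLittleO).norm_right
  have := Complex.dist_le_mul_div_pow_of_mapsTo_ball_of_isLittleO hkd hkm hko hx
  rw [hkc, dist_zero_right, dist_eq_norm] at this
  exact this

open Set Metric Filter Topology Asymptotics in
/-- **Lemma 4.6** (holomorphy of partial application into the Banach space of bounded
functions).  Let `E` and `F` be complex Banach spaces, `U ⊆ E` and `V ⊆ F` open sets,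
`M ≥ 0`, and let `f : U × V → ℂ` be holomorphic with `‖f (z,w)‖ ≤ M` on `U × V`.
Then for each `z ∈ U` the function `w ↦ f (z,w)` is a bounded continuous function on `V`
(i.e. there is a map `G` into the Banach space `V →ᵇ ℂ` of bounded continuous functions
with `G z w = f (z,w)` for `z ∈ U`), the induced map `G : U → (V →ᵇ ℂ)` is holomorphic
on `U`, and its Fréchet derivative satisfies `(DG_z h) w = D₁f_{(z,w)} h`, where
`D₁f_{(z,w)}` is the partial Fréchet derivative of `f` in the first variable. -/
theorem holomorphic_into_boundedContinuousFunctions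
    (E F : Type*) [NormedAddCommGroup E] [NormedSpace ℂ E] [CompleteSpace E]
    [NormedAddCommGroup F] [NormedSpace ℂ F] [CompleteSpace F]
    (U : Set E) (V : Set F) (hU : IsOpen U) (hV : IsOpen V)
    (M : ℝ) (hM : 0 ≤ M) (f : E × F → ℂ)
    (hf : DifferentiableOn ℂ f (U ×ˢ V))
    (hbound : ∀ p ∈ U ×ˢ V, ‖f p‖ ≤ M) :
    ∃ G : E → BoundedContinuousFunction V ℂ,
      (∀ z ∈ U, ∀ w : V, G z w = f (z, (w : F))) ∧
      DifferentiableOn ℂ G U ∧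
      (∀ z ∈ U, ∀ h : E, ∀ w : V,
        (fderiv ℂ G z h) w = fderiv ℂ (fun z' => f (z', (w : F))) z h) := by
  classical
  have hslice : ∀ w : V, DifferentiableOn ℂ (fun z' => f (z', (w : F))) U := by
    intro w
    refine hf.comp (f := fun z' : E => (z', (w : F))) ?_ (fun z hz => ⟨hz, w.2⟩)
    exact (differentiable_id.prodMk (differentiable_const _)).differentiableOn
  have hcont : ∀ z ∈ U, Continuous (fun w : V => f (z, (w : F))) := by
    intro z hz
    refine hf.continuousOn.comp_continuous (by fun_prop) (fun w => ⟨hz, w.2⟩)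
  let G : E → BoundedContinuousFunction V ℂ := fun z =>
    if hz : z ∈ U then
      BoundedContinuousFunction.ofNormedAddCommGroup (fun w : V => f (z, (w : F)))
        (hcont z hz) M (fun w => hbound _ ⟨hz, w.2⟩)
    else 0
  have hG : ∀ z ∈ U, ∀ w : V, G z w = f (z, (w : F)) := by
    intro z hz w
    simp [G, hz]
  have key : ∀ z ∈ U, ∃ D : E →L[ℂ] BoundedContinuousFunction V ℂ, HasFDerivAt G D z ∧
      ∀ h : E, ∀ w : V, D h w = fderiv ℂ (fun z' => f (z', (w : F))) z h := by
    intro z hz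
    obtain ⟨R, hR, hRU⟩ := Metric.isOpen_iff.1 hU z hz
    have hT := fun w : V => taylor_estimate_aux (M := M) hR ((hslice w).mono hRU)
      (fun x hx => hbound _ ⟨hRU hx, w.2⟩)
    have hLc : ∀ h : E, Continuous
        (fun w : V => fderiv ℂ (fun z' => f (z', (w : F))) z h) := by
      intro h
      have hzt : Tendsto (fun t : ℂ => z + t • h) (𝓝[≠] 0) (𝓝 z) := by
        have : Continuous (fun t : ℂ => z + t • h) := by fun_prop
        simpa using (this.tendsto 0).mono_left nhdsWithin_le_nhds
      have hball : ∀ᶠ t : ℂ in 𝓝[≠] 0, z + t • h ∈ ball z R :=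
        hzt (ball_mem_nhds z hR)
      have hne : ∀ᶠ t : ℂ in 𝓝[≠] 0, t ≠ 0 := eventually_mem_nhdsWithin
      have hunif : TendstoUniformly
          (fun (t : ℂ) (w : V) => t⁻¹ * (f (z + t • h, (w : F)) - f (z, (w : F))))
          (fun w : V => fderiv ℂ (fun z' => f (z', (w : F))) z h) (𝓝[≠] 0) := by
        rw [Metric.tendstoUniformly_iff]
        intro ε hε
        have hsm : Tendsto (fun t : ℂ => 4 * M * (‖h‖ / R) ^ 2 * ‖t‖) (𝓝[≠] 0) (𝓝 0) := by
          have : Continuous (fun t : ℂ => 4 * M * (‖h‖ / R) ^ 2 * ‖t‖) := by fun_prop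
          simpa using (this.tendsto 0).mono_left nhdsWithin_le_nhds
        filter_upwards [hball, hne, hsm (Iio_mem_nhds hε)] with t ht ht0 hte w
        refine lt_of_le_of_lt ?_ hte
        have h1 := (hT w).2 _ ht
        rw [add_sub_cancel_left, map_smul, norm_smul, smul_eq_mul] at h1
        rw [dist_comm, dist_eq_norm]
        have h2 : t⁻¹ * (f (z + t • h, (w : F)) - f (z, (w : F)))
            - fderiv ℂ (fun z' => f (z', (w : F))) z h
            = t⁻¹ * (f (z + t • h, (w : F)) - f (z, (w : F))
              - t * fderiv ℂ (fun z' => f (z', (w : F))) z h) := by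
          field_simp
        have ht' : 0 < ‖t‖ := norm_pos_iff.2 ht0
        rw [h2, norm_mul, norm_inv, inv_mul_le_iff₀ ht']
        refine h1.trans_eq ?_
        ring
      refine hunif.continuous (Eventually.frequently ?_)
      filter_upwards [hball] with t ht
      exact continuous_const.mul ((hcont _ (hRU ht)).sub (hcont z hz))
    have hLb : ∀ (h : E) (w : V),
        ‖fderiv ℂ (fun z' => f (z', (w : F))) z h‖ ≤ 2 * M / R * ‖h‖ := fun h w =>
      ContinuousLinearMap.le_of_opNorm_le _ (hT w).1 h
    let D₀ : E →ₗ[ℂ] BoundedContinuousFunction V ℂ :=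
      { toFun := fun h => BoundedContinuousFunction.ofNormedAddCommGroup _ (hLc h)
          (2 * M / R * ‖h‖) (hLb h)
        map_add' := fun a b => by ext w; simp
        map_smul' := fun a b => by ext w; simp }
    let D : E →L[ℂ] BoundedContinuousFunction V ℂ := D₀.mkContinuous (2 * M / R) (fun h =>
      BoundedContinuousFunction.norm_ofNormedAddCommGroup_le (hLc h) (by positivity) (hLb h))
    have hD : ∀ h : E, ∀ w : V, D h w = fderiv ℂ (fun z' => f (z', (w : F))) z h :=
      fun h w => rfl
    refine ⟨D, ?_, hD⟩
    rw [hasFDerivAt_iff_isLittleO]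
    refine IsBigO.trans_isLittleO ?_ (isLittleO_pow_sub_sub z (one_lt_two))
    refine IsBigO.of_bound (4 * M / R ^ 2) ?_
    filter_upwards [ball_mem_nhds z hR] with x hx
    rw [BoundedContinuousFunction.norm_le (by positivity)]
    intro w
    have h1 := (hT w).2 x hx
    simp only [BoundedContinuousFunction.coe_sub, Pi.sub_apply, hD, hG x (hRU hx), hG z hz]
    refine h1.trans_eq ?_
    rw [norm_pow, norm_norm]
    ring
  refine ⟨G, hG, fun z hz => ?_, fun z hz h w => ?_⟩
  · obtain ⟨D, hD, -⟩ := key z hz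
    exact hD.differentiableAt.differentiableWithinAt
  · obtain ⟨D, hD, hD'⟩ := key z hz
    rw [hD.fderiv, hD']
end

section
/- Quadratic Taylor remainder estimate for bounded holomorphic functions (from the proof of Lemma 4.6). Let E be a complex Banach space, z ∈ E, R > 0, M ≥ 0, and let f : E → ℂ be holomorphic on the open ball B(z,R) with |f(x)| ≤ M for all x ∈ B(z,R). Then for every h ∈ E with ‖h‖ < R one has |f(z+h) − f(z) − Df_z(h)| ≤ M·‖h‖² / (R − ‖h‖)², where Df_z denotes the Fréchet derivative of f at z. -/
/-- **Quadratic Taylor remainder estimate for bounded holomorphic functions**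
(from the proof of Lemma 4.6).  Let `E` be a complex Banach space, `z ∈ E`, `R > 0`,
`M ≥ 0`, and let `f : E → ℂ` be holomorphic on the open ball `B(z,R)` with `‖f x‖ ≤ M`
for all `x ∈ B(z,R)`.  Then for every `h ∈ E` with `‖h‖ < R` one has
`‖f (z+h) − f z − Df_z h‖ ≤ M ‖h‖² / (R − ‖h‖)²`, where `Df_z` is the Fréchet
derivative of `f` at `z`. -/
theorem quadratic_taylor_remainder_of_bounded_holomorphic
    (E : Type*) [NormedAddCommGroup E] [NormedSpace ℂ E] [CompleteSpace E]
    (f : E → ℂ) (z : E) (R M : ℝ) (hR : 0 < R) (hM : 0 ≤ M)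
    (hf : DifferentiableOn ℂ f (Metric.ball z R))
    (hbound : ∀ x ∈ Metric.ball z R, ‖f x‖ ≤ M) :
    ∀ h : E, ‖h‖ < R →
      ‖f (z + h) - f z - fderiv ℂ f z h‖ ≤ M * ‖h‖ ^ 2 / (R - ‖h‖) ^ 2 := by
  intro h hh
  rcases eq_or_ne h 0 with rfl | hne
  · simp
  have hp : 0 < ‖h‖ := norm_pos_iff.mpr hne
  obtain ⟨r, hr⟩ : ∃ r, r = R / ‖h‖ := ⟨_, rfl⟩
  have hr1 : 1 < r := by rw [hr, one_lt_div hp]; exact hh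
  have hRr : R = r * ‖h‖ := by rw [hr]; field_simp
  have hmem : ∀ t : ℂ, ‖t‖ < r → z + t • h ∈ Metric.ball z R := by
    intro t ht
    rw [Metric.mem_ball, dist_eq_norm, add_sub_cancel_left, norm_smul, hRr]
    exact mul_lt_mul_of_pos_right ht hp
  obtain ⟨g, hg⟩ : ∃ g : ℂ → ℂ, g = fun t => f (z + t • h) := ⟨_, rfl⟩
  have hgd : DifferentiableOn ℂ g (Metric.ball 0 r) := by
    rw [hg]
    refine hf.comp (f := fun t : ℂ => z + t • h) (by fun_prop) ?_
    intro t ht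
    exact hmem t (by simpa using ht)
  have hder : deriv g 0 = fderiv ℂ f z h := by
    have h1 : HasFDerivAt f (fderiv ℂ f z) (z + (0 : ℂ) • h) := by
      rw [zero_smul, add_zero]
      exact (hf.differentiableAt (Metric.ball_mem_nhds z hR)).hasFDerivAt
    have h2 : HasDerivAt (fun t : ℂ => z + t • h) h 0 := by
      simpa using ((hasDerivAt_id (0 : ℂ)).smul_const h).const_add z
    rw [hg]
    exact (h1.comp_hasDerivAt (0 : ℂ) h2).deriv
  have hs := Complex.hasSum_taylorSeries_on_ball hgd
    (z := 1) (by simpa using hr1)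
  obtain ⟨ρ, hρ⟩ : ∃ ρ, ρ = r - (r - 1) / (2 * r) := ⟨_, rfl⟩
  have he : (r - 1) / (2 * r) * (2 * r) = r - 1 := by field_simp
  have hepos : 0 < (r - 1) / (2 * r) := div_pos (by linarith) (by linarith)
  have hρr : ρ < r := by linarith
  have hρ1 : 1 < ρ := by nlinarith
  have hρ2 : (r - 1) ^ 2 ≤ ρ * (ρ - 1) := by
    rw [hρ]; nlinarith
  have hρ0 : 0 < ρ := by linarith
  have hc : ∀ n : ℕ, ‖iteratedDeriv n g 0‖ ≤ n.factorial * M / ρ ^ n := by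
    intro n
    refine Complex.norm_iteratedDeriv_le_of_forall_mem_sphere_norm_le n hρ0 ?_ ?_
    · apply DifferentiableOn.diffContOnCl
      rw [closure_ball _ hρ0.ne']
      exact hgd.mono (Metric.closedBall_subset_ball hρr)
    · intro t ht
      rw [hg]
      exact hbound _ (hmem t (by simp at ht; linarith))
  have hs2 := (hasSum_nat_add_iff' 2).mpr hs
  have hgeo : HasSum (fun n : ℕ => M / ρ ^ 2 * (ρ⁻¹) ^ n) (M / ρ ^ 2 * (1 - ρ⁻¹)⁻¹) :=
    (hasSum_geometric_of_lt_one (by positivity) (inv_lt_one_of_one_lt₀ hρ1)).mul_left _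
  have hle := hs2.norm_le_of_bounded hgeo (by
    intro n
    have hfac : (0 : ℝ) < (n + 2).factorial := by exact_mod_cast Nat.factorial_pos _
    have := hc (n + 2)
    simp only [sub_zero, one_pow, one_smul, norm_smul, norm_inv, Complex.norm_natCast]
    calc _ ≤ ((n + 2).factorial : ℝ)⁻¹ * ((n + 2).factorial * M / ρ ^ (n + 2)) := by gcongr
      _ = _ := by rw [pow_add, inv_pow]; field_simp)
  have hX : g 1 - ∑ i ∈ Finset.range 2, ((i.factorial : ℂ)⁻¹ • (1 - 0 : ℂ) ^ i • iteratedDeriv i g 0)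
      = f (z + h) - f z - fderiv ℂ f z h := by
    rw [← hder]
    simp [Finset.sum_range_succ, iteratedDeriv_one, hg]
    ring
  rw [← hX]
  refine (le_of_eq_of_le ?_ hle).trans ?_
  · simp
  have h3 : M / ρ ^ 2 * (1 - ρ⁻¹)⁻¹ = M / (ρ * (ρ - 1)) := by
    have : ρ - 1 ≠ 0 := by linarith
    field_simp
  have h4 : M * ‖h‖ ^ 2 / (R - ‖h‖) ^ 2 = M / (r - 1) ^ 2 := by
    have : r - 1 ≠ 0 := by linarith
    have e : R - ‖h‖ = (r - 1) * ‖h‖ := by rw [hRr]; ring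
    rw [e]; field_simp
  rw [h3, h4]
  have : 0 < r - 1 := by linarith
  gcongr
end

section
/- Lemma 11.3. Let R be a nontrivial commutative local ring and let I, J ⊆ R be two ideals such that the product ideal I·J is a principal ideal generated by a non-zero-divisor. Then both I and J are principal ideals generated by non-zero-divisors. -/
theorem aux_factor_principal {R : Type*} [CommRing R] [IsLocalRing R] (I J : Ideal R)
    (a : R) (h : I * J = Ideal.span {a}) (ha : a ∈ nonZeroDivisors R) :
    ∃ b : R, I = Ideal.span {b} ∧ b ∈ nonZeroDivisors R := by
  have key : ∃ x ∈ I, ∃ y ∈ J, ∃ u : R, IsUnit u ∧ x * y = u * a := by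
    by_contra hcon
    have hle : I * J ≤ IsLocalRing.maximalIdeal R * Ideal.span {a} := by
      rw [Ideal.mul_le]
      intro x hx y hy
      have hxy : x * y ∈ Ideal.span {a} := h ▸ Ideal.mul_mem_mul hx hy
      obtain ⟨r, hr⟩ := Ideal.mem_span_singleton'.1 hxy
      rw [← hr]
      refine Ideal.mul_mem_mul ?_ (Ideal.mem_span_singleton_self a)
      rw [IsLocalRing.mem_maximalIdeal]
      intro hu
      exact hcon ⟨x, hx, y, hy, r, hu, hr.symm⟩
    have ha' : a ∈ IsLocalRing.maximalIdeal R * Ideal.span {a} :=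
      hle (h ▸ Ideal.mem_span_singleton_self a)
    obtain ⟨m, hm, hma⟩ := Ideal.mem_mul_span_singleton.1 ha'
    have h1 : m = 1 := by
      have : (m - 1) * a = 0 := by rw [sub_mul, hma, one_mul, sub_self]
      exact sub_eq_zero.1 ((mul_right_mem_nonZeroDivisors_eq_zero_iff ha).1 this)
    rw [h1, IsLocalRing.mem_maximalIdeal] at hm
    exact hm isUnit_one
  obtain ⟨x, hx, y, hy, u, hu, hxy⟩ := key
  have hmem : x * y ∈ nonZeroDivisors R := by
    rw [hxy]
    exact mul_mem hu.mem_nonZeroDivisors ha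
  obtain ⟨hxn, hyn⟩ := mul_mem_nonZeroDivisors.1 hmem
  refine ⟨x, le_antisymm ?_ ((Ideal.span_singleton_le_iff_mem I).2 hx), hxn⟩
  intro z hz
  have hzy : z * y ∈ Ideal.span {a} := h ▸ Ideal.mul_mem_mul hz hy
  obtain ⟨s, hs⟩ := Ideal.mem_span_singleton'.1 hzy
  obtain ⟨v, hv⟩ := hu.exists_left_inv
  refine Ideal.mem_span_singleton'.2 ⟨s * v, ?_⟩
  have : (s * v * x - z) * y = 0 := by
    linear_combination s * v * hxy + s * a * hv + hs
  exact sub_eq_zero.1 ((mul_right_mem_nonZeroDivisors_eq_zero_iff hyn).1 this)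

/-- **Lemma 11.3.** Let `R` be a nontrivial commutative local ring and `I, J ⊆ R` two ideals
such that the product ideal `I·J` is a principal ideal generated by a non-zero-divisor.
Then both `I` and `J` are principal ideals generated by non-zero-divisors. -/
theorem product_principal_nonZeroDivisor_implies_factors_principal
    (R : Type*) [CommRing R] [Nontrivial R] [IsLocalRing R] (I J : Ideal R)
    (h : ∃ a : R, I * J = Ideal.span {a} ∧ a ∈ nonZeroDivisors R) :
    (∃ b : R, I = Ideal.span {b} ∧ b ∈ nonZeroDivisors R) ∧
    (∃ c : R, J = Ideal.span {c} ∧ c ∈ nonZeroDivisors R) := by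
  obtain ⟨a, h, ha⟩ := h
  exact ⟨aux_factor_principal I J a h ha,
    aux_factor_principal J I a (by rw [mul_comm, h]) ha⟩
end

section
/- Lemma 11.4. Let R be a nontrivial commutative local ring and let h₁, …, h_n ∈ R (n ≥ 1) be non-zero-divisors. Let D = ∏_{∅ ≠ S ⊆ {1,…,n}} (h_i : i ∈ S) be the product, over all nonempty subsets S of {1,…,n}, of the ideals generated by {h_i : i ∈ S}. Then D is a principal ideal generated by a non-zero-divisor if and only if h₁, …, h_n are totally ordered by the divisibility relation, i.e. for all indices i, j one has h_i ∣ h_j or h_j ∣ h_i. -/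
theorem dvd_or_dvd_of_mul_eq {R : Type*} [CommRing R] [IsLocalRing R] (x y b : R) (J : Ideal R)
    (hb : b ∈ nonZeroDivisors R) (hJ : Ideal.span {x, y} * J = Ideal.span {b}) :
    x ∣ y ∨ y ∣ x := by
  have key : ∀ x y u α : R, x * u = b * α → IsUnit α → b ∣ y * u → x ∣ y := by
    intro x y u α h1 hα h2
    obtain ⟨c, hc⟩ := h2
    obtain ⟨β, hβ⟩ := hα.exists_right_inv
    have hbu : b = u * (x * β) := by linear_combination (-b) * hβ - β * h1
    have hu : u ∈ nonZeroDivisors R := by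
      rw [hbu] at hb
      exact (mul_mem_nonZeroDivisors.mp hb).1
    refine ⟨β * c, ?_⟩
    have h3 : (y - x * (β * c)) * u = 0 := by linear_combination hc + c * hbu
    exact sub_eq_zero.mp ((mul_right_mem_nonZeroDivisors_eq_zero_iff hu).mp h3)
  have hmem : ∀ z ∈ Ideal.span {x, y}, ∀ u ∈ J, b ∣ z * u := by
    intro z hz u hu
    rw [← Ideal.mem_span_singleton, ← hJ]
    exact Ideal.mul_mem_mul hz hu
  have hx : x ∈ Ideal.span {x, y} := Ideal.subset_span (by simp)
  have hy : y ∈ Ideal.span {x, y} := Ideal.subset_span (by simp)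
  have hbm : b ∈ Ideal.span {x, y} * J := by
    rw [hJ]; exact Ideal.mem_span_singleton_self b
  rw [Ideal.span_insert, Ideal.sup_mul, Submodule.mem_sup] at hbm
  obtain ⟨p, hp, q, hq, hpq⟩ := hbm
  obtain ⟨u, hu, rfl⟩ := Ideal.mem_span_singleton_mul.mp hp
  obtain ⟨v, hv, rfl⟩ := Ideal.mem_span_singleton_mul.mp hq
  obtain ⟨α, hα⟩ := hmem x hx u hu
  obtain ⟨β, hβ⟩ := hmem y hy v hv
  have h1 : α + β = 1 := by
    have h3 : (α + β - 1) * b = 0 := by linear_combination hpq - hα - hβ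
    exact sub_eq_zero.mp ((mul_right_mem_nonZeroDivisors_eq_zero_iff hb).mp h3)
  rcases IsLocalRing.isUnit_or_isUnit_of_add_one h1 with hU | hU
  · exact Or.inl (key x y u α hα hU (hmem y hy u hu))
  · exact Or.inr (key y x v β hβ hU (hmem x hx v hv))

theorem exists_dvd_min {R ι : Type*} [CommRing R] (h : ι → R)
    (ht : ∀ i j, h i ∣ h j ∨ h j ∣ h i) (S : Finset ι) (hS : S.Nonempty) :
    ∃ i ∈ S, ∀ j ∈ S, h i ∣ h j := by
  induction hS using Finset.Nonempty.cons_induction with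
  | singleton a => exact ⟨a, by simp, by simp⟩
  | cons a s ha hs ih =>
    obtain ⟨i, hi, hmin⟩ := ih
    rcases ht a i with h1 | h1
    · refine ⟨a, by simp, fun j hj => ?_⟩
      rcases Finset.mem_cons.mp hj with rfl | hj
      · exact dvd_rfl
      · exact h1.trans (hmin j hj)
    · refine ⟨i, by simp [hi], fun j hj => ?_⟩
      rcases Finset.mem_cons.mp hj with rfl | hj
      · exact h1
      · exact hmin j hj

/-- **Lemma 11.4.** Let `R` be a nontrivial commutative local ring and `h₁, …, hₙ ∈ R`
(with `n ≥ 1`) non-zero-divisors.  Let `D` be the product, over all nonempty subsets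
`S ⊆ {1,…,n}`, of the ideals generated by `{hᵢ : i ∈ S}`.  Then `D` is a principal ideal
generated by a non-zero-divisor if and only if `h₁, …, hₙ` are totally ordered by
divisibility, i.e. for all `i, j` one has `hᵢ ∣ hⱼ` or `hⱼ ∣ hᵢ`. -/
theorem disorderly_ideal_principal_iff_divisibility_chain
    (R : Type*) [CommRing R] [Nontrivial R] [IsLocalRing R] (n : ℕ) (hn : 1 ≤ n)
    (h : Fin n → R) (hnzd : ∀ i : Fin n, h i ∈ nonZeroDivisors R) :
    (∃ b : R,
        (∏ S ∈ (Finset.univ : Finset (Fin n)).powerset.erase ∅,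
            Ideal.span (h '' (S : Set (Fin n)))) = Ideal.span {b} ∧
        b ∈ nonZeroDivisors R)
      ↔ ∀ i j : Fin n, h i ∣ h j ∨ h j ∣ h i := by
  classical
  constructor
  · rintro ⟨b, hD, hb⟩ i j
    have hmem : ({i, j} : Finset (Fin n)) ∈
        (Finset.univ : Finset (Fin n)).powerset.erase ∅ := by
      simp
    rw [← Finset.mul_prod_erase _ _ hmem] at hD
    rw [show h '' ((({i, j} : Finset (Fin n)) : Set (Fin n))) = {h i, h j} by
      simp [Set.image_pair]] at hD
    exact dvd_or_dvd_of_mul_eq _ _ _ _ hb hD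
  · intro ht
    have hex : ∀ S : Finset (Fin n), ∃ i : Fin n, S.Nonempty → i ∈ S ∧ ∀ j ∈ S, h i ∣ h j := by
      intro S
      by_cases hS : S.Nonempty
      · obtain ⟨i, hi, hm⟩ := exists_dvd_min h ht S hS
        exact ⟨i, fun _ => ⟨hi, hm⟩⟩
      · exact ⟨⟨0, hn⟩, fun h' => absurd h' hS⟩
    choose g hg using hex
    refine ⟨∏ S ∈ (Finset.univ : Finset (Fin n)).powerset.erase ∅, h (g S), ?_,
      prod_mem fun S _ => hnzd _⟩
    rw [← Ideal.prod_span_singleton]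
    refine Finset.prod_congr rfl fun S hS => ?_
    obtain ⟨hi, hm⟩ := hg S (Finset.nonempty_iff_ne_empty.mpr (Finset.ne_of_mem_erase hS))
    apply le_antisymm
    · rw [Ideal.span_le]
      rintro _ ⟨j, hj, rfl⟩
      exact Ideal.mem_span_singleton.mpr (hm j hj)
    · rw [Ideal.span_singleton_le_iff_mem]
      exact Ideal.subset_span ⟨_, hi, rfl⟩
end

section
/- Key step in the proof of Lemma 11.4. Let R be a nontrivial commutative local ring, b ∈ R a non-zero-divisor, and h₁, …, h_n ∈ R elements such that the ideal (h₁, …, h_n) generated by them equals the principal ideal (b). Then there exists an index i such that h_i divides h_j for every j ∈ {1,…,n}; in particular (h₁, …, h_n) = (h_i). -/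
/-- **Key step in the proof of Lemma 11.4.** Let `R` be a nontrivial commutative local ring,
`b ∈ R` a non-zero-divisor, and `h₁, …, hₙ ∈ R` elements such that the ideal `(h₁, …, hₙ)`
generated by them equals the principal ideal `(b)`.  Then there exists an index `i` such
that `hᵢ` divides `hⱼ` for every `j ∈ {1,…,n}`; in particular `(h₁, …, hₙ) = (hᵢ)`. -/
theorem exists_generator_of_span_eq_span_singleton_nonZeroDivisor
    (R : Type*) [CommRing R] [Nontrivial R] [IsLocalRing R] (n : ℕ) (h : Fin n → R)
    (b : R) (hb : b ∈ nonZeroDivisors R)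
    (hspan : Ideal.span (Set.range h) = Ideal.span {b}) :
    ∃ i : Fin n, (∀ j : Fin n, h i ∣ h j) ∧ Ideal.span (Set.range h) = Ideal.span {h i} := by
  have hdvd : ∀ j, b ∣ h j := fun j => by
    rw [← Ideal.mem_span_singleton, ← hspan]
    exact Ideal.subset_span ⟨j, rfl⟩
  choose c hc using hdvd
  have hbm : b ∈ Ideal.span (Set.range h) := by
    rw [hspan]
    exact Ideal.mem_span_singleton_self b
  obtain ⟨a, ha⟩ := (Ideal.mem_span_range_iff_exists_fun).1 hbm
  have hsum : ∑ i, a i * c i = 1 := by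
    have h0 : (∑ i, a i * c i - 1) * b = 0 := by
      have h1 : ∑ i, a i * h i = (∑ i, a i * c i) * b := by
        rw [Finset.sum_mul]
        refine Finset.sum_congr rfl fun i _ => ?_
        rw [hc i]
        ring
      rw [sub_mul, one_mul, ← h1, ha, sub_self]
    exact sub_eq_zero.1 ((mul_right_mem_nonZeroDivisors_eq_zero_iff hb).1 h0)
  have hex : ∃ i, IsUnit (c i) := by
    by_contra! hne
    have hm : (1 : R) ∈ IsLocalRing.maximalIdeal R := by
      rw [← hsum]
      exact Ideal.sum_mem _ fun i _ => Ideal.mul_mem_left _ _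
        ((IsLocalRing.mem_maximalIdeal _).2 (hne i))
    exact (IsLocalRing.mem_maximalIdeal _).1 hm isUnit_one
  obtain ⟨i, hi⟩ := hex
  have hib : Associated b (h i) := by
    obtain ⟨u, hu⟩ := hi
    exact ⟨u, by rw [hu, hc i]⟩
  refine ⟨i, fun j => hib.symm.dvd.trans ⟨c j, hc j⟩, ?_⟩
  rw [hspan]
  exact le_antisymm (Ideal.span_singleton_le_span_singleton.2 hib.symm.dvd)
    (Ideal.span_singleton_le_span_singleton.2 hib.dvd)
end

section
/- Strebel normal form, zero case (case ord₀ω = k ≥ 0 of Theorem 4.1). Let δ > 0, k ∈ ℕ, and let g : Δ_δ → ℂ be holomorphic with g(0) ≠ 0. Then there exist ε > 0 and an injective holomorphic map φ : Δ_ε → Δ_δ with φ(0) = 0 such that φ(z)^k · g(φ(z)) · φ′(z) = z^k for all z ∈ Δ_ε. (This expresses that the conformal change of coordinate φ pulls back the differential ω = z^k g(z) dz to the standard form z^k dz.) -/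
open Filter Topology

/-- **Strebel normal form, zero case** (case `ord₀ ω = k ≥ 0` of Theorem 4.1).
Let `δ > 0`, `k ∈ ℕ`, and let `g : Δ_δ → ℂ` be holomorphic with `g 0 ≠ 0`.
Then there exist `ε > 0` and an injective holomorphic map `φ : Δ_ε → Δ_δ` with
`φ 0 = 0` such that `φ(z)^k · g(φ(z)) · φ′(z) = z^k` on `Δ_ε`, i.e. `φ` pulls back
the differential `ω = z^k g(z) dz` to the standard form `z^k dz`. -/
theorem strebel_normal_form_zero
    (δ : ℝ) (hδ : 0 < δ) (k : ℕ) (g : ℂ → ℂ)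
    (hg : DifferentiableOn ℂ g (Metric.ball 0 δ)) (hg0 : g 0 ≠ 0) :
    ∃ ε : ℝ, 0 < ε ∧ ∃ φ : ℂ → ℂ,
      Set.InjOn φ (Metric.ball 0 ε) ∧
      DifferentiableOn ℂ φ (Metric.ball 0 ε) ∧
      Set.MapsTo φ (Metric.ball 0 ε) (Metric.ball 0 δ) ∧
      φ 0 = 0 ∧
      ∀ z ∈ Metric.ball (0 : ℂ) ε, φ z ^ k * g (φ z) * deriv φ z = z ^ k := by
  have hnn : (0 : ℂ) ∈ Metric.ball (0 : ℂ) δ := Metric.mem_ball_self hδ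
  have hbn : Metric.ball (0 : ℂ) δ ∈ 𝓝 (0 : ℂ) := Metric.ball_mem_nhds 0 hδ
  have hkn : ((k : ℂ) + 1) ≠ 0 := Nat.cast_add_one_ne_zero k
  have hd : DifferentiableOn ℂ (fun w : ℂ => w ^ k * g w) (Metric.ball 0 δ) :=
    (differentiable_pow k).differentiableOn.mul hg
  obtain ⟨F, hF0, hF⟩ := (hd.isExactOn_ball).with_val_at 0 0
  have hFa : AnalyticAt ℂ F 0 :=
    DifferentiableOn.analyticAt (s := Metric.ball 0 δ)
      (fun z hz => (hF z hz).differentiableAt.differentiableWithinAt) hbn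
  have hga : AnalyticAt ℂ g 0 := hg.analyticAt hbn
  have hdF : deriv F =ᶠ[𝓝 0] fun w => w ^ k * g w := by
    filter_upwards [hbn] with z hz using (hF z hz).deriv
  have hord : analyticOrderAt (deriv F) 0 = k := by
    rw [hFa.deriv.analyticOrderAt_eq_natCast]
    refine ⟨g, hga, hg0, ?_⟩
    filter_upwards [hdF] with z hz
    simpa using hz
  have hordF : analyticOrderAt F 0 = ((k + 1 : ℕ) : ℕ∞) := by
    have h := hFa.analyticOrderAt_deriv_add_one
    rw [hord] at h
    simpa [hF0] using h.symm
  obtain ⟨H, hHa, hH0, hFH⟩ := hFa.analyticOrderAt_eq_natCast.mp hordF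
  simp only [sub_zero, smul_eq_mul] at hFH
  obtain ⟨c, hc⟩ := IsAlgClosed.exists_pow_nat_eq (((k : ℂ) + 1) * H 0) (Nat.succ_pos k)
  have hc0 : c ≠ 0 := by
    rintro rfl
    rw [zero_pow (Nat.succ_ne_zero k)] at hc
    exact mul_ne_zero hkn hH0 hc.symm
  let R : ℂ → ℂ := fun w => c * (H w / H 0) ^ (((k + 1 : ℕ) : ℂ)⁻¹)
  have hRa : AnalyticAt ℂ R 0 := by
    refine analyticAt_const.mul (AnalyticAt.cpow (hHa.div analyticAt_const hH0) analyticAt_const ?_)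
    simp [hH0]
  have hR0 : R 0 = c := by simp [R, hH0]
  have hRp : ∀ w, R w ^ (k + 1) = ((k : ℂ) + 1) * H w := by
    intro w
    simp only [R, mul_pow]
    rw [Complex.cpow_nat_inv_pow _ (Nat.succ_ne_zero k), hc]
    field_simp
  let ψ : ℂ → ℂ := fun w => w * R w
  have hψa : AnalyticAt ℂ ψ 0 := analyticAt_id.mul hRa
  have hψ0 : ψ 0 = 0 := by simp [ψ]
  have hψd : deriv ψ 0 ≠ 0 := by
    have h : HasDerivAt ψ (1 * R 0 + 0 * deriv R 0) 0 :=
      (hasDerivAt_id (0 : ℂ)).mul hRa.differentiableAt.hasDerivAt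
    rw [h.deriv]
    simpa [hR0] using hc0
  have hψp : ∀ᶠ w in 𝓝 0, ψ w ^ (k + 1) = ((k : ℂ) + 1) * F w := by
    filter_upwards [hFH] with w hw
    simp only [ψ, mul_pow, hRp, hw]
    ring
  have hinv := hψa.analyticAt_localInverse hψd
  have hri := hψa.hasStrictDerivAt.eventually_right_inverse hψd
  have hli := hψa.hasStrictDerivAt.eventually_left_inverse hψd
  set φ : ℂ → ℂ := hψa.hasStrictDerivAt.localInverse _ _ _ hψd
  have hφ0 : φ 0 = 0 := by simpa [hψ0] using hli.self_of_nhds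
  rw [hψ0] at hinv hri
  have hcont : Tendsto φ (𝓝 0) (𝓝 0) := by
    simpa [ContinuousAt, hφ0] using hinv.continuousAt
  have key : ∀ᶠ z in 𝓝 (0 : ℂ), z ^ (k + 1) = ((k : ℂ) + 1) * F (φ z) := by
    filter_upwards [hri, hcont.eventually hψp] with z h1 h2
    rw [← h2, h1]
  have hall : ∀ᶠ z in 𝓝 (0 : ℂ), ψ (φ z) = z ∧ AnalyticAt ℂ φ z ∧ φ z ∈ Metric.ball (0 : ℂ) δ ∧
      ∀ᶠ y in 𝓝 z, y ^ (k + 1) = ((k : ℂ) + 1) * F (φ y) :=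
    hri.and (hinv.eventually_analyticAt.and
      ((hcont.eventually hbn).and (eventually_eventually_nhds.mpr key)))
  obtain ⟨ε, hε, hball⟩ := Metric.eventually_nhds_iff_ball.mp hall
  refine ⟨ε, hε, φ, ?_, ?_, ?_, hφ0, ?_⟩
  · intro x hx y hy hxy
    rw [← (hball x hx).1, ← (hball y hy).1, hxy]
  · exact fun z hz => (hball z hz).2.1.differentiableAt.differentiableWithinAt
  · exact fun z hz => (hball z hz).2.2.1
  · intro z hz
    obtain ⟨-, ha, hm, he⟩ := hball z hz
    have h1 : HasDerivAt (fun y => ((k : ℂ) + 1) * F (φ y))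
        (((k : ℂ) + 1) * (φ z ^ k * g (φ z) * deriv φ z)) z :=
      ((hF _ hm).comp z ha.differentiableAt.hasDerivAt).const_mul _
    have h2 : HasDerivAt (fun y : ℂ => y ^ (k + 1)) (((k : ℂ) + 1) * z ^ k) z := by
      simpa using hasDerivAt_pow (k + 1) z
    exact mul_left_cancel₀ hkn ((h1.congr_of_eventuallyEq he).unique h2)
end

section
/- Uniqueness in Strebel normal form, zero case (Theorem 4.1). Let δ > 0, k ∈ ℕ, and let g : Δ_δ → ℂ be holomorphic with g(0) ≠ 0. Suppose φ₁, φ₂ : Δ_ε → Δ_δ are injective holomorphic maps with φ₁(0) = φ₂(0) = 0 which both satisfy φ_i(z)^k · g(φ_i(z)) · φ_i′(z) = z^k for all z ∈ Δ_ε. Then there exist ζ ∈ ℂ with ζ^{k+1} = 1 and ε′ > 0 such that φ₁(z) = φ₂(ζ·z) for all z ∈ Δ_{ε′}; that is, the germ of φ is unique up to precomposition with multiplication by a (k+1)-st root of unity. -/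
open Filter Topology in
lemma strebel_aux_deriv_ne {δ ε : ℝ} (hδ : 0 < δ) (hε : 0 < ε) (k : ℕ) (g φ : ℂ → ℂ)
    (hg : DifferentiableOn ℂ g (Metric.ball 0 δ))
    (hd : DifferentiableOn ℂ φ (Metric.ball 0 ε)) (h0 : φ 0 = 0)
    (heq : ∀ z ∈ Metric.ball (0 : ℂ) ε, φ z ^ k * g (φ z) * deriv φ z = z ^ k) :
    deriv φ 0 ≠ 0 := by
  have hnε : Metric.ball (0 : ℂ) ε ∈ 𝓝 0 := Metric.ball_mem_nhds _ hε
  have hnδ : Metric.ball (0 : ℂ) δ ∈ 𝓝 0 := Metric.ball_mem_nhds _ hδ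
  have ha : AnalyticAt ℂ φ 0 := hd.analyticAt hnε
  have hgc : ContinuousAt g (φ 0) := by
    rw [h0]; exact (hg.differentiableAt hnδ).continuousAt
  have hs : ContinuousAt (dslope φ 0) 0 := continuousAt_dslope_same.2 ha.differentiableAt
  have hF : ContinuousAt (fun z => dslope φ 0 z ^ k * g (φ z) * deriv φ z) 0 :=
    ((hs.pow k).mul (ContinuousAt.comp (f := φ) hgc ha.continuousAt)).mul ha.deriv.continuousAt
  have h1 : (fun z => dslope φ 0 z ^ k * g (φ z) * deriv φ z) =ᶠ[𝓝[≠] 0] fun _ => (1 : ℂ) := by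
    filter_upwards [mem_nhdsWithin_of_mem_nhds hnε, self_mem_nhdsWithin] with z hz hz0
    have hz0 : z ≠ 0 := hz0
    have e := heq z hz
    have e2 : φ z = z * dslope φ 0 z := by
      have := sub_smul_dslope φ 0 z
      simpa [h0] using this.symm
    have hp : z ^ k ≠ 0 := pow_ne_zero _ hz0
    apply mul_left_cancel₀ hp
    rw [mul_one]
    calc _ = (z * dslope φ 0 z) ^ k * g (φ z) * deriv φ z := by ring
      _ = _ := by rw [← e2, e]
  have h2 : dslope φ 0 0 ^ k * g (φ 0) * deriv φ 0 = 1 :=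
    tendsto_nhds_unique (hF.tendsto.mono_left nhdsWithin_le_nhds)
      (tendsto_const_nhds.congr' h1.symm)
  intro h
  simp [h] at h2

open Filter Topology in
lemma strebel_aux_root (k : ℕ) (h : ℂ → ℂ) (ha : AnalyticAt ℂ h 0) (h0 : h 0 = 0)
    (heq : ∀ᶠ z in 𝓝 (0 : ℂ), h z ^ k * deriv h z = z ^ k) :
    ∃ ζ : ℂ, ζ ^ (k + 1) = 1 ∧ ∀ᶠ z in 𝓝 (0 : ℂ), h z = ζ * z := by
  have hpow : ∀ᶠ z in 𝓝 (0 : ℂ), h z ^ (k + 1) = z ^ (k + 1) := by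
    obtain ⟨r, hr, hb⟩ := Metric.eventually_nhds_iff_ball.1 (heq.and ha.eventually_analyticAt)
    have hd : ∀ z ∈ Metric.ball (0 : ℂ) r, DifferentiableAt ℂ h z :=
      fun z hz => (hb z hz).2.differentiableAt
    have := Metric.isOpen_ball.eqOn_of_deriv_eq (𝕜 := ℂ) (f := fun z => h z ^ (k + 1))
      (g := fun z => z ^ (k + 1)) (convex_ball (0 : ℂ) r).isPreconnected
      (fun z hz => ((hd z hz).pow _).differentiableWithinAt)
      (differentiable_pow _).differentiableOn
      (fun z hz => by
        have e1 := ((hd z hz).hasDerivAt.pow (k + 1)).deriv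
        have e2 := (hasDerivAt_pow (k + 1) z).deriv
        have e3 : deriv (fun z => h z ^ (k + 1)) z = deriv (h ^ (k + 1)) z := rfl
        rw [e3, e1, e2, ← show _ = z ^ (k + 1 - 1) from (hb z hz).1]
        simp [mul_assoc])
      (Metric.mem_ball_self hr) (by simp [h0])
    exact eventually_of_mem (Metric.ball_mem_nhds _ hr) this
  have hs : ContinuousAt (dslope h 0) 0 := continuousAt_dslope_same.2 ha.differentiableAt
  have e2 : ∀ z, h z = z * dslope h 0 z := fun z => by
    have := sub_smul_dslope h 0 z
    simpa [h0] using this.symm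
  have h1 : ∀ᶠ z in 𝓝[≠] (0 : ℂ), dslope h 0 z ^ (k + 1) = 1 := by
    filter_upwards [hpow.filter_mono nhdsWithin_le_nhds, self_mem_nhdsWithin] with z hz hz0
    have hz0 : z ≠ 0 := hz0
    rw [e2, mul_pow] at hz
    exact mul_left_cancel₀ (pow_ne_zero (k + 1) hz0) (by rw [hz, mul_one])
  have h2 : dslope h 0 0 ^ (k + 1) = 1 :=
    tendsto_nhds_unique ((hs.pow (k + 1)).tendsto.mono_left nhdsWithin_le_nhds)
      (tendsto_const_nhds.congr' (h1.mono fun _ hz => hz.symm))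
  refine ⟨dslope h 0 0, h2, ?_⟩
  have hfin : ({w : ℂ | w ^ (k + 1) = 1} \ {dslope h 0 0}).Finite := by
    refine Set.Finite.sdiff ?_
    refine (Polynomial.nthRootsFinset (k + 1) (1 : ℂ)).finite_toSet.subset fun w hw => ?_
    exact (Polynomial.mem_nthRootsFinset k.succ_pos _).2 hw
  have h3 : ∀ᶠ z in 𝓝 (0 : ℂ), dslope h 0 z ∈ ({w : ℂ | w ^ (k + 1) = 1} \ {dslope h 0 0})ᶜ :=
    hs (hfin.isClosed.isOpen_compl.mem_nhds (by simp))
  filter_upwards [h3, eventually_nhdsWithin_iff.1 h1] with z hz hz1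
  by_cases hz0 : z = 0
  · simp [hz0, h0]
  · have hw := hz1 hz0
    have : dslope h 0 z = dslope h 0 0 := by
      by_contra hne
      exact hz ⟨hw, hne⟩
    rw [e2, this, mul_comm]

open Filter Topology in
/-- **Uniqueness in the Strebel normal form, zero case** (Theorem 4.1).
Let `δ > 0`, `k ∈ ℕ`, and let `g : Δ_δ → ℂ` be holomorphic with `g 0 ≠ 0`.
Suppose `φ₁, φ₂ : Δ_ε → Δ_δ` are injective holomorphic maps with `φ₁ 0 = φ₂ 0 = 0`
which both satisfy `φᵢ(z)^k · g(φᵢ(z)) · φᵢ′(z) = z^k` on `Δ_ε`.  Then there exist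
`ζ` with `ζ^(k+1) = 1` and `ε′ > 0` such that `φ₁ z = φ₂ (ζ z)` for all `z ∈ Δ_{ε′}`:
the germ of `φ` is unique up to precomposition with a `(k+1)`-st root of unity. -/
theorem strebel_normal_form_zero_unique
    (δ ε : ℝ) (hδ : 0 < δ) (hε : 0 < ε) (k : ℕ) (g : ℂ → ℂ)
    (hg : DifferentiableOn ℂ g (Metric.ball 0 δ)) (hg0 : g 0 ≠ 0)
    (φ₁ φ₂ : ℂ → ℂ)
    (hinj₁ : Set.InjOn φ₁ (Metric.ball 0 ε)) (hinj₂ : Set.InjOn φ₂ (Metric.ball 0 ε))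
    (hdiff₁ : DifferentiableOn ℂ φ₁ (Metric.ball 0 ε))
    (hdiff₂ : DifferentiableOn ℂ φ₂ (Metric.ball 0 ε))
    (hmaps₁ : Set.MapsTo φ₁ (Metric.ball 0 ε) (Metric.ball 0 δ))
    (hmaps₂ : Set.MapsTo φ₂ (Metric.ball 0 ε) (Metric.ball 0 δ))
    (h0₁ : φ₁ 0 = 0) (h0₂ : φ₂ 0 = 0)
    (heq₁ : ∀ z ∈ Metric.ball (0 : ℂ) ε, φ₁ z ^ k * g (φ₁ z) * deriv φ₁ z = z ^ k)
    (heq₂ : ∀ z ∈ Metric.ball (0 : ℂ) ε, φ₂ z ^ k * g (φ₂ z) * deriv φ₂ z = z ^ k) :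
    ∃ ζ : ℂ, ζ ^ (k + 1) = 1 ∧
      ∃ ε' : ℝ, 0 < ε' ∧ ∀ z ∈ Metric.ball (0 : ℂ) ε', φ₁ z = φ₂ (ζ * z) := by
  have hnε : Metric.ball (0 : ℂ) ε ∈ 𝓝 0 := Metric.ball_mem_nhds _ hε
  have ha₁ : AnalyticAt ℂ φ₁ 0 := hdiff₁.analyticAt hnε
  have ha₂ : AnalyticAt ℂ φ₂ 0 := hdiff₂.analyticAt hnε
  have hne := strebel_aux_deriv_ne hδ hε k g φ₂ hg hdiff₂ h0₂ heq₂
  have hex : ∃ ψ : ℂ → ℂ, AnalyticAt ℂ ψ 0 ∧ ψ 0 = 0 ∧ ∀ᶠ w in 𝓝 (0 : ℂ), φ₂ (ψ w) = w := by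
    refine ⟨ha₂.hasStrictDerivAt.localInverse _ _ _ hne, ?_, ?_, ?_⟩
    · have := ha₂.analyticAt_localInverse hne
      rwa [h0₂] at this
    · have := (ha₂.hasStrictDerivAt.eventually_left_inverse hne).self_of_nhds
      rwa [h0₂] at this
    · have := ha₂.hasStrictDerivAt.eventually_right_inverse hne
      rwa [h0₂] at this
  obtain ⟨ψ, hψ, hψ0, hψr⟩ := hex
  have hha : AnalyticAt ℂ (fun z => ψ (φ₁ z)) 0 :=
    AnalyticAt.fun_comp (g := ψ) (by rwa [h0₁]) ha₁
  have hh0 : ψ (φ₁ 0) = 0 := by rw [h0₁, hψ0]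
  have ht₁ : Tendsto φ₁ (𝓝 0) (𝓝 0) := by
    have := ha₁.continuousAt.tendsto
    rwa [h0₁] at this
  have hth : Tendsto (fun z => ψ (φ₁ z)) (𝓝 0) (𝓝 0) := by
    have := hha.continuousAt.tendsto
    rwa [hh0] at this
  have hcomp : ∀ᶠ z in 𝓝 (0 : ℂ), φ₂ (ψ (φ₁ z)) = φ₁ z := ht₁.eventually hψr
  obtain ⟨ζ, hζ, hev⟩ := strebel_aux_root k (fun z => ψ (φ₁ z)) hha hh0 (by
    filter_upwards [hcomp.eventually_nhds, hha.eventually_analyticAt, hnε,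
      hth.eventually hnε] with z hz hza hzε hzh
    have hd2 := (hdiff₂.differentiableAt (Metric.isOpen_ball.mem_nhds hzh)).hasDerivAt
    have hc := (hd2.comp z hza.differentiableAt.hasDerivAt).deriv
    have hc' : deriv φ₁ z = deriv φ₂ (ψ (φ₁ z)) * deriv (fun z => ψ (φ₁ z)) z := by
      rw [← hc]
      exact (EventuallyEq.deriv_eq hz).symm
    have e1 := heq₁ z hzε
    have e2 := heq₂ _ hzh
    rw [hz.self_of_nhds] at e2
    rw [← e1, hc', ← mul_assoc, ← e2])
  refine ⟨ζ, hζ, ?_⟩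
  obtain ⟨r, hr, hb⟩ := Metric.eventually_nhds_iff_ball.1 (hev.and hcomp)
  refine ⟨r, hr, fun z hz => ?_⟩
  obtain ⟨h1, h2⟩ := hb z hz
  rw [← h2, ← h1]
end

section
/- Strebel normal form, higher-order pole case (case ord₀ω = −m < −1 of Theorem 4.1). Let δ > 0, let m ≥ 2 be an integer, and let u : Δ_δ → ℂ be holomorphic with u(0) ≠ 0. Set f(z) = u(z)/z^m for z ∈ Δ_δ∖{0}, and let r be the (m−1)-st Taylor coefficient of u at 0 (i.e. r = u^{(m−1)}(0)/(m−1)!, the residue of f at 0). Then there exist ε > 0 and an injective holomorphic map φ : Δ_ε → Δ_δ with φ(0) = 0 such that f(φ(z)) · φ′(z) = z^{−m} + r·z^{−1} for all z ∈ Δ_ε∖{0}. (This expresses that φ pulls back the meromorphic differential ω = f(z) dz to the standard form (z^{−m+1} + r) dz/z.) -/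
open Filter Topology in
lemma strebel_aux_primitive (u : ℂ → ℂ) (hu : AnalyticAt ℂ u 0) (k : ℕ) (r : ℂ)
    (hr : r = iteratedDeriv k u 0 / (Nat.factorial k : ℂ)) :
    ∃ g : ℂ → ℂ, AnalyticAt ℂ g 0 ∧
      ∀ᶠ z in 𝓝 (0 : ℂ), z * deriv g z - k * g z = u z - r * z ^ k := by
  obtain ⟨w, hw, huw⟩ := hu.exists_eventuallyEq_sum_add_pow_mul (k + 1)
  obtain ⟨ρ, hρ, hball⟩ := Metric.eventually_nhds_iff_ball.1 hw.eventually_analyticAt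
  have hd : DifferentiableOn ℂ w (Metric.ball 0 ρ) := fun z hz =>
    (hball z hz).differentiableAt.differentiableWithinAt
  obtain ⟨W, hW⟩ := hd.isExactOn_ball
  have hWa : AnalyticAt ℂ W 0 := by
    refine DifferentiableOn.analyticAt (s := Metric.ball 0 ρ)
      (fun z hz => (hW z hz).differentiableAt.differentiableWithinAt) (Metric.ball_mem_nhds _ hρ)
  set a : ℕ → ℂ := fun i => iteratedDeriv i u 0 / (Nat.factorial i : ℂ) with ha
  refine ⟨fun z => (∑ i ∈ Finset.range k, a i / ((i : ℂ) - k) * z ^ i) + z ^ k * W z, ?_, ?_⟩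
  · refine AnalyticAt.add (Finset.analyticAt_fun_sum _ fun i hi ↦ by fun_prop) (by fun_prop)
  · filter_upwards [huw, Metric.ball_mem_nhds _ hρ] with z hz hzb
    have h1 : HasDerivAt (fun z => (∑ i ∈ Finset.range k, a i / ((i : ℂ) - k) * z ^ i) + z ^ k * W z)
      ((∑ i ∈ Finset.range k, a i / ((i : ℂ) - k) * (i * z ^ (i - 1))) +
        ((k * z ^ (k - 1)) * W z + z ^ k * w z)) z := by
      refine HasDerivAt.add (HasDerivAt.fun_sum fun i _ => (hasDerivAt_pow i z).const_mul _)
        ((hasDerivAt_pow k z).mul (hW z hzb))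
    have hp : ∀ i : ℕ, z * ((i : ℂ) * z ^ (i - 1)) = i * z ^ i := by
      intro i
      rcases i with _ | i
      · simp
      · simp only [Nat.add_sub_cancel]; ring
    rw [h1.deriv, hz, Finset.sum_range_succ, hr]
    have h2 : ∑ i ∈ Finset.range k, (z ^ i / (Nat.factorial i : ℂ)) • iteratedDeriv i u 0 =
        z * (∑ i ∈ Finset.range k, a i / ((i : ℂ) - k) * (i * z ^ (i - 1)))
        - k * (∑ i ∈ Finset.range k, a i / ((i : ℂ) - k) * z ^ i) := by
      rw [Finset.mul_sum, Finset.mul_sum, ← Finset.sum_sub_distrib]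
      refine Finset.sum_congr rfl fun i hi => ?_
      have hik : (i : ℂ) - k ≠ 0 := by
        rw [sub_ne_zero]
        exact_mod_cast (Finset.mem_range.1 hi).ne
      have : z * (a i / ((i : ℂ) - k) * (i * z ^ (i - 1))) - k * (a i / ((i : ℂ) - k) * z ^ i)
          = (a i / ((i : ℂ) - k)) * ((i - k) * z ^ i) := by
        linear_combination (a i / ((i : ℂ) - k)) * hp i
      rw [this, ← mul_assoc, div_mul_cancel₀ _ hik, ha, smul_eq_mul]
      ring
    rw [h2]
    simp only [smul_eq_mul]
    linear_combination W z * hp k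

open Filter Topology in
lemma strebel_aux_implicit (G : ℂ × ℂ → ℂ) (hG : AnalyticAt ℂ G (0, 0)) (hG0 : G (0, 0) = 0)
    (d : ℂ) (hd : d ≠ 0) (hGd : HasDerivAt (fun h => G (0, h)) d 0) :
    ∃ h : ℂ → ℂ, AnalyticAt ℂ h 0 ∧ h 0 = 0 ∧ ∀ᶠ z in 𝓝 (0 : ℂ), G (z, h z) = 0 := by
  have hc : ContDiffAt ℂ ⊤ G (0, 0) := hG.contDiffAt
  have hinv : (fderiv ℂ G (0, 0) ∘L .inr ℂ ℂ ℂ).IsInvertible := by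
    refine ⟨ContinuousLinearEquiv.unitsEquivAut ℂ (Units.mk0 d hd), ?_⟩
    have h1 : HasFDerivAt (fun h : ℂ => G (0, h)) (fderiv ℂ G (0, 0) ∘L .inr ℂ ℂ ℂ) 0 :=
      HasFDerivAt.comp (g := G) (f := fun h : ℂ => ((0 : ℂ), h)) (0 : ℂ)
        hG.differentiableAt.hasFDerivAt (hasFDerivAt_prodMk_right 0 0)
    have := h1.hasDerivAt.unique hGd
    ext
    simpa using this.symm
  refine ⟨hc.implicitFunction (by simp) hinv, ?_, hc.implicitFunction_apply_self (by simp) hinv, ?_⟩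
  · have := hc.contDiffAt_implicitFunction (by simp) hinv
    exact this.analyticAt
  · have := hc.eventually_apply_implicitFunction (by simp) hinv
    simpa [hG0] using this

open Filter Topology in
theorem strebel_aux_main (δ : ℝ) (hδ : 0 < δ) (k : ℕ) (hk : k ≠ 0) (u : ℂ → ℂ)
    (hu : DifferentiableOn ℂ u (Metric.ball 0 δ)) (hu0 : u 0 ≠ 0) (r : ℂ)
    (hr : r = iteratedDeriv k u 0 / (Nat.factorial k : ℂ)) :
    ∃ ε : ℝ, 0 < ε ∧ ∃ φ : ℂ → ℂ,
      Set.InjOn φ (Metric.ball 0 ε) ∧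
      DifferentiableOn ℂ φ (Metric.ball 0 ε) ∧
      Set.MapsTo φ (Metric.ball 0 ε) (Metric.ball 0 δ) ∧
      φ 0 = 0 ∧
      ∀ z ∈ Metric.ball (0 : ℂ) ε, z ≠ 0 → φ z ≠ 0 ∧
        u (φ z) / (φ z) ^ (k + 1) * deriv φ z = (z ^ (k + 1))⁻¹ + r * z⁻¹ := by
  have hua : AnalyticAt ℂ u 0 := hu.analyticAt (Metric.ball_mem_nhds _ hδ)
  obtain ⟨g, hg, hgu⟩ := strebel_aux_primitive u hua k r hr
  have hkC : (k : ℂ) ≠ 0 := by exact_mod_cast hk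
  have hg0 : -(k * g 0) = u 0 := by simpa [hk] using hgu.self_of_nhds
  obtain ⟨c, hc⟩ : ∃ c : ℂ, c ^ k = u 0 := IsAlgClosed.exists_pow_nat_eq _ (Nat.pos_of_ne_zero hk)
  have hc0 : c ≠ 0 := by
    rintro rfl
    exact hu0 (by rw [← hc, zero_pow hk])
  set G : ℂ × ℂ → ℂ := fun p => (u 0)⁻¹ * Complex.exp (-(k * p.2)) * g (c * p.1 * Complex.exp p.2)
    + r * p.1 ^ k * p.2 + (k : ℂ)⁻¹ with hGdef
  have hG : AnalyticAt ℂ G (0, 0) := by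
    have hfst : AnalyticAt ℂ (fun p : ℂ × ℂ => p.1) (0, 0) := analyticAt_fst
    have hsnd : AnalyticAt ℂ (fun p : ℂ × ℂ => p.2) (0, 0) := analyticAt_snd
    have : AnalyticAt ℂ (fun p : ℂ × ℂ => g (c * p.1 * Complex.exp p.2)) (0, 0) :=
      AnalyticAt.fun_comp (g := g) (f := fun p : ℂ × ℂ => c * p.1 * Complex.exp p.2)
        (by simpa using hg) ((analyticAt_const.mul hfst).mul hsnd.cexp)
    exact ((((analyticAt_const.mul (analyticAt_const.mul hsnd).neg.cexp).mul this).add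
      ((analyticAt_const.mul (hfst.pow k)).mul hsnd)).add analyticAt_const)
  have hG0 : G (0, 0) = 0 := by
    simp only [hGdef]
    simp [hk]
    rw [← hg0]
    have : g 0 ≠ 0 := by rintro h; simp [h] at hg0; exact hu0 hg0.symm
    field_simp
    ring
  have hGd : HasDerivAt (fun h => G (0, h)) 1 0 := by
    have : (fun h => G (0, h)) = fun h => (u 0)⁻¹ * Complex.exp (-(k * h)) * g 0 + (k : ℂ)⁻¹ := by
      ext h; simp [hGdef, hk]
    rw [this]
    have h1 : HasDerivAt (fun h : ℂ => -(k * h)) (-(k * 1)) 0 := ((hasDerivAt_id 0).const_mul _).neg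
    have h2 := ((h1.cexp.const_mul (u 0)⁻¹).mul_const (g 0)).add_const (k : ℂ)⁻¹
    refine h2.congr_deriv ?_
    simp
    field_simp
    exact hg0
  obtain ⟨h, hh, hh0, hGh⟩ := strebel_aux_implicit G hG hG0 1 one_ne_zero hGd
  set φ : ℂ → ℂ := fun z => c * z * Complex.exp (h z) with hφ
  have hφa : AnalyticAt ℂ φ 0 := by fun_prop
  have hφ0 : φ 0 = 0 := by simp [hφ]
  have hφt : Tendsto φ (𝓝 0) (𝓝 0) := by simpa [hφ0] using hφa.continuousAt.tendsto
  have hφd : ∀ z, DifferentiableAt ℂ h z →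
      HasDerivAt φ (c * Complex.exp (h z) * (1 + z * deriv h z)) z := by
    intro z hz
    have := ((hasDerivAt_id z).const_mul c).mul hz.hasDerivAt.cexp
    refine this.congr_deriv ?_
    simp; ring
  -- injectivity
  have hinj : ∃ s ∈ 𝓝 (0 : ℂ), Set.InjOn φ s := by
    have hs : HasStrictDerivAt φ c 0 := by
      have h1 := hφa.hasStrictDerivAt
      rw [(hφd 0 hh.differentiableAt).deriv] at h1
      simpa [hh0] using h1
    have hs' := hs.hasStrictFDerivAt_equiv hc0
    refine ⟨(hs'.toOpenPartialHomeomorph φ).source,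
      (hs'.toOpenPartialHomeomorph φ).open_source.mem_nhds hs'.mem_toOpenPartialHomeomorph_source, ?_⟩
    simpa using (hs'.toOpenPartialHomeomorph φ).injOn
  obtain ⟨s, hs, hsinj⟩ := hinj
  have hall : ∀ᶠ z in 𝓝 (0 : ℂ), z ∈ s ∧ DifferentiableAt ℂ h z ∧ φ z ∈ Metric.ball (0 : ℂ) δ ∧
      (∀ᶠ y in 𝓝 z, G (y, h y) = 0) ∧ DifferentiableAt ℂ g (φ z) ∧
      (φ z * deriv g (φ z) - k * g (φ z) = u (φ z) - r * (φ z) ^ k) := by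
    filter_upwards [hs, hh.eventually_analyticAt, hφt (Metric.ball_mem_nhds _ hδ),
      hGh.eventually_nhds, hφt.eventually hg.eventually_analyticAt, hφt.eventually hgu] with
      z h1 h2 h3 h4 h5 h6
    exact ⟨h1, h2.differentiableAt, h3, h4, h5.differentiableAt, h6⟩
  obtain ⟨ε, hε, hb⟩ := Metric.eventually_nhds_iff_ball.1 hall
  refine ⟨ε, hε, φ, hsinj.mono fun z hz => (hb z hz).1,
    fun z hz => (hφd z (hb z hz).2.1).differentiableAt.differentiableWithinAt,
    fun z hz => (hb z hz).2.2.1, hφ0, ?_⟩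
  intro z hz hz0
  obtain ⟨-, hhz, -, hGz, hgz, hode⟩ := hb z hz
  have hφz : φ z ≠ 0 := by
    simp only [hφ]
    exact mul_ne_zero (mul_ne_zero hc0 hz0) (Complex.exp_ne_zero _)
  refine ⟨hφz, ?_⟩
  have hφ' := hφd z hhz
  set E : ℂ := (u 0)⁻¹ * Complex.exp (-(k * h z)) with hE
  set h' := deriv h z with hh'
  have hEφ : E * φ z ^ k = z ^ k := by
    simp only [hE, hφ, mul_pow, hc, ← Complex.exp_nat_mul, Complex.exp_neg]
    have := Complex.exp_ne_zero (k * h z)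
    field_simp
  have hE0 : HasDerivAt (fun y => (u 0)⁻¹ * Complex.exp (-(k * h y))) (E * (-(k * h'))) z := by
    have := ((hhz.hasDerivAt.const_mul (k : ℂ)).fun_neg.cexp).const_mul (u 0)⁻¹
    refine this.congr_deriv ?_
    rw [hE]; ring
  have heq : E * g (φ z) + r * z ^ k * h z + (k : ℂ)⁻¹ = 0 := hGz.self_of_nhds
  have hder : E * (-(k * h')) * g (φ z) + E * (deriv g (φ z) * (c * Complex.exp (h z) * (1 + z * h')))
      + (r * (k * z ^ (k - 1)) * h z + r * z ^ k * h') = 0 := by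
    have h1 : HasDerivAt (fun y => G (y, h y)) (E * (-(k * h')) * g (φ z)
      + E * (deriv g (φ z) * (c * Complex.exp (h z) * (1 + z * h')))
      + (r * (k * z ^ (k - 1)) * h z + r * z ^ k * h')) z := by
      have := ((hE0.fun_mul (hgz.hasDerivAt.comp z hφ')).fun_add
        (((hasDerivAt_pow k z).const_mul r).fun_mul hhz.hasDerivAt)).add_const (k : ℂ)⁻¹
      exact this
    have h2 : HasDerivAt (fun y => G (y, h y)) 0 z :=
      (hasDerivAt_const z (0 : ℂ)).congr_of_eventuallyEq hGz
    exact h1.unique h2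
  have hp : z * ((k : ℂ) * z ^ (k - 1)) = k * z ^ k := by
    obtain ⟨j, rfl⟩ := Nat.exists_eq_succ_of_ne_zero hk
    simp only [Nat.succ_eq_add_one, Nat.add_sub_cancel]; ring
  have hφe : φ z = z * (c * Complex.exp (h z)) := by simp only [hφ]; ring
  have hkey : (1 + z * h') * E * u (φ z) = 1 + r * z ^ k := by
    have hki : (k : ℂ) * (k : ℂ)⁻¹ = 1 := mul_inv_cancel₀ hkC
    linear_combination z * hder - (k : ℂ) * heq + hki - (1 + z * h') * E * hode
      + (1 + z * h') * E * deriv g (φ z) * hφe - r * h z * hp + r * (1 + z * h') * hEφ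
  rw [hφ'.deriv]
  have hzk : z ^ k ≠ 0 := pow_ne_zero _ hz0
  have hφk : φ z ^ k ≠ 0 := pow_ne_zero _ hφz
  have hfin : (1 + z * h') * u (φ z) * z ^ k = (1 + r * z ^ k) * φ z ^ k := by
    linear_combination φ z ^ k * hkey - (1 + z * h') * u (φ z) * hEφ
  have hce : c * Complex.exp (h z) = φ z / z := by rw [hφe]; field_simp
  rw [hce]
  rw [pow_succ, pow_succ]
  field_simp
  linear_combination hfin

/-- **Strebel normal form, higher-order pole case** (case `ord₀ ω = −m < −1` of
Theorem 4.1).  Let `δ > 0`, `m ≥ 2`, and `u : Δ_δ → ℂ` holomorphic with `u 0 ≠ 0`.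
Set `f z = u z / z^m` for `z ≠ 0`, and let `r = u^{(m−1)}(0)/(m−1)!` be the
`(m−1)`-st Taylor coefficient of `u` at `0` (the residue of `f` at `0`).  Then there
exist `ε > 0` and an injective holomorphic map `φ : Δ_ε → Δ_δ` with `φ 0 = 0` such
that `f(φ(z)) · φ′(z) = z^{−m} + r z^{−1}` on `Δ_ε ∖ {0}`, i.e. `φ` pulls back the
meromorphic differential `ω = f(z) dz` to the standard form `(z^{−m+1} + r) dz/z`. -/
theorem strebel_normal_form_higher_pole
    (δ : ℝ) (hδ : 0 < δ) (m : ℕ) (hm : 2 ≤ m)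
    (u : ℂ → ℂ) (hu : DifferentiableOn ℂ u (Metric.ball 0 δ)) (hu0 : u 0 ≠ 0)
    (f : ℂ → ℂ) (hf : ∀ z : ℂ, z ≠ 0 → f z = u z / z ^ m)
    (r : ℂ) (hr : r = iteratedDeriv (m - 1) u 0 / (Nat.factorial (m - 1) : ℂ)) :
    ∃ ε : ℝ, 0 < ε ∧ ∃ φ : ℂ → ℂ,
      Set.InjOn φ (Metric.ball 0 ε) ∧
      DifferentiableOn ℂ φ (Metric.ball 0 ε) ∧
      Set.MapsTo φ (Metric.ball 0 ε) (Metric.ball 0 δ) ∧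
      φ 0 = 0 ∧
      ∀ z ∈ Metric.ball (0 : ℂ) ε, z ≠ 0 →
        f (φ z) * deriv φ z = (z ^ m)⁻¹ + r * z⁻¹ := by

  obtain ⟨k, rfl⟩ : ∃ k, m = k + 1 := ⟨m - 1, by omega⟩
  obtain ⟨ε, hε, φ, h1, h2, h3, h4, h5⟩ :=
    strebel_aux_main δ hδ k (by omega) u hu hu0 r (by simpa using hr)
  refine ⟨ε, hε, φ, h1, h2, h3, h4, fun z hz hz0 => ?_⟩
  obtain ⟨h6, h7⟩ := h5 z hz hz0
  rw [hf _ h6, h7]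
end

section
/- Strebel normal form, simple pole case (case ord₀ω = −1 of Theorem 4.1). Let δ > 0 and let u : Δ_δ → ℂ be holomorphic with r := u(0) ≠ 0, and set f(z) = u(z)/z for z ∈ Δ_δ∖{0}. Then there exist ε > 0 and an injective holomorphic map φ : Δ_ε → Δ_δ with φ(0) = 0 such that f(φ(z)) · φ′(z) = r/z for all z ∈ Δ_ε∖{0}. (This expresses that φ pulls back the meromorphic differential ω = f(z) dz, which has a simple pole at 0 with residue r, to the standard form r·dz/z.) -/
open Filter Topology in
/-- **Strebel normal form, simple pole case** (case `ord₀ ω = −1` of Theorem 4.1).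
Let `δ > 0` and `u : Δ_δ → ℂ` holomorphic with `r := u 0 ≠ 0`, and set
`f z = u z / z` for `z ≠ 0`.  Then there exist `ε > 0` and an injective holomorphic
map `φ : Δ_ε → Δ_δ` with `φ 0 = 0` such that `f(φ(z)) · φ′(z) = r/z` on `Δ_ε ∖ {0}`,
i.e. `φ` pulls back the meromorphic differential `ω = f(z) dz`, which has a simple
pole at `0` with residue `r`, to the standard form `r · dz/z`. -/
theorem strebel_normal_form_simple_pole
    (δ : ℝ) (hδ : 0 < δ)
    (u : ℂ → ℂ) (hu : DifferentiableOn ℂ u (Metric.ball 0 δ))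
    (r : ℂ) (hr : r = u 0) (hr0 : r ≠ 0)
    (f : ℂ → ℂ) (hf : ∀ z : ℂ, z ≠ 0 → f z = u z / z) :
    ∃ ε : ℝ, 0 < ε ∧ ∃ φ : ℂ → ℂ,
      Set.InjOn φ (Metric.ball 0 ε) ∧
      DifferentiableOn ℂ φ (Metric.ball 0 ε) ∧
      Set.MapsTo φ (Metric.ball 0 ε) (Metric.ball 0 δ) ∧
      φ 0 = 0 ∧
      ∀ z ∈ Metric.ball (0 : ℂ) ε, z ≠ 0 → f (φ z) * deriv φ z = r / z := by
  have hball : Metric.ball (0 : ℂ) δ ∈ 𝓝 (0 : ℂ) := Metric.ball_mem_nhds _ hδ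
  have hv : DifferentiableOn ℂ (fun z => dslope u 0 z / r) (Metric.ball 0 δ) :=
    ((Complex.differentiableOn_dslope hball).2 hu).div_const r
  obtain ⟨g, hg⟩ := hv.isExactOn_ball
  have huv : ∀ z, u z = r + z * dslope u 0 z := by
    intro z
    have := sub_smul_dslope u 0 z
    simp only [sub_zero, smul_eq_mul] at this
    rw [this, hr]; ring
  -- the inverse coordinate
  set ψ : ℂ → ℂ := fun z => z * Complex.exp (g z) with hψ
  have hψd : ∀ z ∈ Metric.ball (0 : ℂ) δ, HasDerivAt ψ (Complex.exp (g z) * u z / r) z := by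
    intro z hz
    have h := (hasDerivAt_id z).mul (hg z hz).cexp
    refine h.congr_deriv ?_
    rw [huv z]
    simp only [id]
    field_simp
  have hψ0 : ψ 0 = 0 := by simp [hψ]
  have han : AnalyticAt ℂ ψ 0 :=
    (DifferentiableOn.analyticAt
      (fun z hz => (hψd z hz).differentiableAt.differentiableWithinAt) hball)
  have hd0 := hψd 0 (Metric.mem_ball_self hδ)
  have hne : Complex.exp (g 0) * u 0 / r ≠ 0 := by
    rw [← hr]
    exact div_ne_zero (mul_ne_zero (Complex.exp_ne_zero _) hr0) hr0
  have hcd : ContDiffAt ℂ 1 ψ 0 := han.contDiffAt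
  have hfd : HasFDerivAt ψ
      ((ContinuousLinearEquiv.unitsEquivAut ℂ (Units.mk0 _ hne) : ℂ ≃L[ℂ] ℂ) : ℂ →L[ℂ] ℂ) 0 := by
    exact hd0.hasFDerivAt_equiv hne
  set φ : ℂ → ℂ := hcd.localInverse hfd one_ne_zero with hφ
  have hs := hcd.hasStrictFDerivAt' hfd one_ne_zero
  have hφ0 : φ 0 = 0 := by
    have := hcd.localInverse_apply_image hfd one_ne_zero
    rwa [hψ0] at this
  have hφc : ContDiffAt ℂ 1 φ 0 := by
    have := hcd.to_localInverse hfd one_ne_zero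
    rwa [hψ0] at this
  have hinv : ∀ᶠ z in 𝓝 (0 : ℂ), ψ (φ z) = z := by
    have := hs.eventually_right_inverse
    rwa [hψ0] at this
  have hdiff : ∀ᶠ z in 𝓝 (0 : ℂ), DifferentiableAt ℂ φ z := by
    filter_upwards [hφc.eventually (by simp)] with z hz
    exact hz.differentiableAt one_ne_zero
  have hmem : ∀ᶠ z in 𝓝 (0 : ℂ), φ z ∈ Metric.ball (0 : ℂ) δ :=
    hφc.continuousAt.eventually_mem (by rwa [hφ0])
  obtain ⟨ε, hε, H⟩ := Metric.eventually_nhds_iff_ball.1 (hinv.eventually_nhds.and (hdiff.and hmem))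
  refine ⟨ε, hε, φ, ?_, fun z hz => (H z hz).2.1.differentiableWithinAt,
    fun z hz => (H z hz).2.2, hφ0, ?_⟩
  · intro a ha b hb hab
    rw [← (H a ha).1.self_of_nhds, ← (H b hb).1.self_of_nhds, hab]
  · intro z hz hz0
    obtain ⟨h1, h2, h3⟩ := H z hz
    have h4 : ψ (φ z) = z := h1.self_of_nhds
    have hp : φ z ≠ 0 := by
      intro h
      rw [h, hψ0] at h4
      exact hz0 h4.symm
    have h5 : Complex.exp (g (φ z)) * u (φ z) / r * deriv φ z = 1 :=
      ((hψd _ h3).comp z h2.hasDerivAt).unique ((hasDerivAt_id z).congr_of_eventuallyEq h1)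
    have h6 : φ z * Complex.exp (g (φ z)) = z := h4
    rw [hf _ hp]
    rw [div_mul_eq_mul_div, div_eq_one_iff_eq hr0] at h5
    rw [div_mul_eq_mul_div, div_eq_div_iff hp hz0]
    linear_combination (φ z) * h5 - u (φ z) * deriv φ z * h6
end
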